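/- arXiv:1206.4946 — 3 statements merged into one kernel-verified Lean document; each statement's English description precedes it below -/
import Mathlib

section
/- (Gauss's genus theorem.) Let d be a squarefree integer, d ≠ 0, 1, let K = ℚ(√d), let δ_K be the discriminant of K, and let m be the number of distinct rational primes dividing δ_K. Let C_K be the ideal class group of K. Then the order of the quotient C_K/C_K² (C_K modulo its subgroup of squares) equals 2^{m−2} if d > 0 and there exists a prime p ≡ 3 (mod 4) dividing δ_K, and equals 2^{m−1} otherwise. -/
open NumberField IntermediateField

open scoped nonZeroDivisors

/-!
Let `S ≤ Kˣ` consist of the elements whose principal fractional ideal is a square, and let `r` be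
the rank of the unit group. The snake lemma for squaring on `Kˣ → {fractional ideals} → C_K → 1`
gives `[S : (Kˣ)²] = 2 ^ (r + 1) * #(C_K / C_K²)`. On the other hand, the rational numbers in `S`
are, up to squares, generated by `-1` and the primes dividing `δ_K`, and modulo `(Kˣ)²` the only
relation is that `d` becomes a square; so they generate a subgroup `S₀ ≥ (Kˣ)²` of `S` with
`[S₀ : (Kˣ)²] = 2 ^ m`. An element of `S` has norm `± q ^ 2`, and by Hilbert 90 it lies in `S₀`
exactly when its norm is positive, so `[S : S₀] ≤ 2`. A negative norm amounts to writing `d` as a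
sum of two rational squares, which is possible exactly when `d > 0` and no prime `p ≡ 3 (mod 4)`
divides `d`. Comparing the two counts gives the theorem, as `r = 1` if `d > 0` and `r = 0` if
`d < 0`.
-/

section PowerMaps

variable {A B C : Type*} [CommGroup A] [CommGroup B] [CommGroup C] {n : ℕ}

theorem card_quotient_range_powMonoidHom [Finite C] (n : ℕ) :
    Nat.card (C ⧸ (powMonoidHom n : C →* C).range) = Nat.card (powMonoidHom n : C →* C).ker := by
  rw [← Subgroup.index_eq_card, Subgroup.index_range]

theorem index_range_powMonoidHom_congr (e : A ≃* B) (n : ℕ) :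
    (powMonoidHom n : A →* A).range.index = (powMonoidHom n : B →* B).range.index := by
  rw [← e.map_range_powMonoidHom, Subgroup.index_map_equiv]

theorem map_range_powMonoidHom (f : A →* B) (n : ℕ) :
    (powMonoidHom n : A →* A).range.map f = f.range.map (powMonoidHom n) := by
  rw [MonoidHom.map_range, MonoidHom.map_range]
  exact congrArg MonoidHom.range (MonoidHom.ext fun x => map_pow f x n)

theorem card_ker_powMonoidHom_congr (e : A ≃* B) (n : ℕ) :
    Nat.card (powMonoidHom n : A →* A).ker = Nat.card (powMonoidHom n : B →* B).ker := by
  refine Nat.card_congr (e.toEquiv.subtypeEquiv fun a => ?_)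
  simp [MonoidHom.mem_ker, ← map_pow]

theorem range_powMonoidHom_relIndex_ker (f : A →* B)
    (hB : Function.Injective (powMonoidHom n : B →* B)) :
    (powMonoidHom n : A →* A).range.relIndex f.ker =
      (powMonoidHom n : f.ker →* f.ker).range.index := by
  rw [Subgroup.relIndex]
  congr 1
  ext x
  constructor
  · rintro ⟨y, hy⟩
    have hfy : f y ^ n = 1 := by rw [← map_pow, ← powMonoidHom_apply, hy]; exact x.2
    exact ⟨⟨y, hB (hfy.trans (map_one (powMonoidHom n)).symm)⟩, Subtype.ext hy⟩
  · rintro ⟨y, rfl⟩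
    exact ⟨y, rfl⟩

/-- This is `[A : Aⁿ] = [A : ker f ⬝ Aⁿ] [ker f ⬝ Aⁿ : Aⁿ]`. -/
theorem index_range_powMonoidHom_of_surjective (f : A →* B) (hf : Function.Surjective f)
    (hB : Function.Injective (powMonoidHom n : B →* B)) :
    (powMonoidHom n : A →* A).range.index =
      (powMonoidHom n : f.ker →* f.ker).range.index * (powMonoidHom n : B →* B).range.index := by
  rw [← range_powMonoidHom_relIndex_ker f hB, ← Subgroup.relIndex_sup_left f.ker,
    ← Subgroup.relIndex_mul_index (le_sup_left (b := f.ker)),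
    ← Subgroup.comap_map_eq, Subgroup.index_comap_of_surjective _ hf,
    map_range_powMonoidHom, MonoidHom.range_eq_top.2 hf, ← MonoidHom.range_eq_map]

theorem map_range_relIndex_range_powMonoidHom (f : A →* B) (g : B →* C)
    (hg : Function.Surjective g) (hfg : g.ker = f.range)
    (hB : Function.Injective (powMonoidHom n : B →* B)) :
    (f.range.map (powMonoidHom n)).relIndex ((powMonoidHom n : B →* B).range ⊓ f.range) =
      Nat.card (powMonoidHom n : C →* C).ker := by
  have hpow : g.ker.comap (powMonoidHom n) = (powMonoidHom n : C →* C).ker.comap g := by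
    ext b
    simp only [Subgroup.mem_comap, MonoidHom.mem_ker, powMonoidHom_apply, map_pow]
  rw [← hfg, ← Subgroup.map_comap_eq, Subgroup.relIndex_map_map_of_injective _ _ hB, hpow,
    Subgroup.relIndex_ker, Subgroup.map_comap_eq_self_of_surjective hg]

/-- The snake lemma for the `n`-th power map on an exact sequence `A → B → C → 1`, as an index
computation: the connecting map sends `x` with `f x = b ^ n` to `g b`. -/
theorem relIndex_comap_range_powMonoidHom (f : A →* B) (g : B →* C)
    (hg : Function.Surjective g) (hfg : g.ker = f.range)
    (hB : Function.Injective (powMonoidHom n : B →* B)) :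
    (powMonoidHom n : A →* A).range.relIndex ((powMonoidHom n : B →* B).range.comap f) =
      (powMonoidHom n : f.ker →* f.ker).range.index * Nat.card (powMonoidHom n : C →* C).ker := by
  set An := (powMonoidHom n : A →* A).range
  have hle : An.map f ≤ (powMonoidHom n : B →* B).range := by
    rw [map_range_powMonoidHom]
    exact Subgroup.map_le_range _ _
  calc An.relIndex ((powMonoidHom n : B →* B).range.comap f)
      = An.relIndex ((An.map f).comap f) *
          ((An.map f).comap f).relIndex ((powMonoidHom n : B →* B).range.comap f) :=
        (Subgroup.relIndex_mul_relIndex _ _ _ (Subgroup.le_comap_map f An)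
          (Subgroup.comap_mono hle)).symm
    _ = An.relIndex f.ker * (An.map f).relIndex ((powMonoidHom n : B →* B).range ⊓ f.range) := by
        rw [Subgroup.relIndex_comap, Subgroup.map_comap_eq, Subgroup.comap_map_eq,
          Subgroup.relIndex_sup_left, inf_comm]
    _ = _ := by
        rw [range_powMonoidHom_relIndex_ker f hB, map_range_powMonoidHom,
          map_range_relIndex_range_powMonoidHom f g hg hfg hB]

theorem index_range_powMonoidHom_of_free (M : Type*) [CommGroup M]
    [Module.Free ℤ (Additive M)] [Module.Finite ℤ (Additive M)] (n : ℕ) :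
    (powMonoidHom n : M →* M).range.index = n ^ Module.finrank ℤ (Additive M) :=
  AddSubgroup.index_range_nsmul (Additive M) n

end PowerMaps

section RationalSquareClasses

theorem mem_range_powMonoidHom_two_iff {F : Type*} [Field F] {u : Fˣ} :
    u ∈ (powMonoidHom 2 : Fˣ →* Fˣ).range ↔ IsSquare (u : F) := by
  constructor
  · rintro ⟨v, rfl⟩
    exact ⟨v, by rw [powMonoidHom_apply, sq, Units.val_mul]⟩
  · rintro ⟨x, hx⟩
    have hx0 : x ≠ 0 := left_ne_zero_of_mul (hx ▸ u.ne_zero)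
    exact ⟨Units.mk0 x hx0, Units.ext (by rw [hx, powMonoidHom_apply, sq]; rfl)⟩

theorem even_padicValNat_iff_of_eq_mul_sq {p : ℕ} [Fact p.Prime] {n k : ℕ} {r : ℚ} (hr : r ≠ 0)
    (hk : k ≠ 0) (h : (n : ℚ) = r * k ^ 2) :
    Even (padicValNat p n) ↔ Even (padicValRat p r) := by
  have hkQ : (k : ℚ) ≠ 0 := Nat.cast_ne_zero.2 hk
  rw [← Int.even_coe_nat, ← padicValRat.of_nat, h, padicValRat.mul hr (pow_ne_zero 2 hkQ),
    padicValRat.pow, Int.even_add]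
  simp

theorem isSquare_of_even_padicValNat {n : ℕ} (hn : n ≠ 0)
    (h : ∀ p, p.Prime → Even (padicValNat p n)) : IsSquare n := by
  rw [← Nat.prod_factorization_pow_eq_self hn, Finsupp.prod]
  refine Finset.isSquare_prod _ fun p hp => Even.isSquare_pow ?_ _
  have hp' := Nat.prime_of_mem_primeFactors (Nat.support_factorization n ▸ hp)
  rw [Nat.factorization_def n hp']
  exact h p hp'

theorem isSquare_of_even_padicValRat {r : ℚ} (hr : 0 < r)
    (h : ∀ p : ℕ, p.Prime → Even (padicValRat p r)) : IsSquare r := by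
  have hden : (r.den : ℚ) ≠ 0 := Nat.cast_ne_zero.2 r.den_nz
  have hn : ((r.num.natAbs * r.den : ℕ) : ℚ) = r * r.den ^ 2 := by
    rw [Nat.cast_mul, Nat.cast_natAbs, abs_of_pos (Rat.num_pos.2 hr), sq, ← mul_assoc,
      Rat.mul_den_eq_num]
  have hsq : IsSquare (r.num.natAbs * r.den) :=
    isSquare_of_even_padicValNat
      (mul_ne_zero (Int.natAbs_ne_zero.2 (Rat.num_pos.2 hr).ne') r.den_nz) fun p hp =>
        have : Fact p.Prime := ⟨hp⟩
        (even_padicValNat_iff_of_eq_mul_sq hr.ne' r.den_nz hn).2 (h p hp)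
  rw [eq_div_of_mul_eq (pow_ne_zero 2 hden) hn.symm]
  exact (Rat.isSquare_natCast_iff.2 hsq).div (IsSquare.sq _)

theorem not_isSquare_ratCast_of_squarefree {d : ℤ} (hsf : Squarefree d) (hd1 : d ≠ 1) :
    ¬ IsSquare (d : ℚ) := by
  rw [Rat.isSquare_intCast_iff]
  rintro ⟨n, rfl⟩
  exact hd1 (Int.isUnit_mul_self (hsf n dvd_rfl))

/-- The parity of the `p`-adic valuation, as a homomorphism. -/
noncomputable def padicParity (p : ℕ) [Fact p.Prime] : ℚˣ →* Multiplicative (ZMod 2) where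
  toFun r := Multiplicative.ofAdd (padicValRat p (r : ℚ) : ZMod 2)
  map_one' := by simp
  map_mul' r t := by
    rw [Units.val_mul, padicValRat.mul r.ne_zero t.ne_zero, Int.cast_add, ofAdd_add]

theorem padicParity_eq_one_iff {p : ℕ} [Fact p.Prime] {r : ℚˣ} :
    padicParity p r = 1 ↔ Even (padicValRat p (r : ℚ)) := by
  rw [← ZMod.intCast_eq_zero_iff_even]
  exact Multiplicative.ofAdd.injective.eq_iff (b := (0 : ZMod 2))

variable (P : Finset ℕ) [∀ p : P, Fact (p : ℕ).Prime]

/-- The sign of a rational number and the parities of its valuations at the primes in `P`. These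
invariants separate square classes of rationals whose valuations outside `P` are even. -/
noncomputable def signParity : ℚˣ →* SignTypeˣ × (P → Multiplicative (ZMod 2)) :=
  (Units.map (signHom (α := ℚ)).toMonoidHom).prod (MonoidHom.pi fun p => padicParity p)

variable {P}

theorem signParity_fst_eq_one_iff {r : ℚˣ} : (signParity P r).1 = 1 ↔ 0 < (r : ℚ) := by
  rw [Units.ext_iff]
  exact sign_eq_one_iff

theorem signParity_snd (r : ℚˣ) (p : P) : (signParity P r).2 p = padicParity p r := rfl

theorem signParity_neg_one : signParity P (-1) = (-1, 1) := by
  refine Prod.ext (Units.ext ?_) (funext fun p => ?_)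
  · exact sign_neg (a := (-1 : ℚ)) (by norm_num)
  · exact padicParity_eq_one_iff.2 (by simp)

theorem signParity_prime (p : P) {r : ℚˣ} (hr : (r : ℚ) = (p : ℕ)) :
    signParity P r = (1, Pi.mulSingle p (Multiplicative.ofAdd 1)) := by
  have hp : (p : ℕ).Prime := Fact.out
  refine Prod.ext (signParity_fst_eq_one_iff.2 ?_) (funext fun q => ?_)
  · rw [hr]
    exact_mod_cast hp.pos
  · rw [signParity_snd]
    rcases eq_or_ne q p with rfl | hqp
    · simp [padicParity, hr]
    · have hne : (q : ℕ) ≠ p := Subtype.coe_ne_coe.2 hqp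
      simp [Pi.mulSingle_eq_of_ne hqp, padicParity_eq_one_iff, hr, padicValRat.of_nat,
        padicValNat_primes hne]

theorem sq_mem_ker_signParity (r : ℚˣ) : r ^ 2 ∈ (signParity P).ker := by
  have hsign : ∀ ε : SignTypeˣ, ε ^ 2 = 1 := by decide
  have hparity : ∀ x : Multiplicative (ZMod 2), x ^ 2 = 1 := by decide
  rw [MonoidHom.mem_ker, map_pow]
  exact Prod.ext (hsign _) (funext fun p => hparity _)

theorem ker_signParity_inf {R : Subgroup ℚˣ}
    (heven : ∀ p : ℕ, p.Prime → p ∉ P → ∀ r ∈ R, Even (padicValRat p (r : ℚ))) :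
    (signParity P).ker ⊓ R = (powMonoidHom 2 : ℚˣ →* ℚˣ).range ⊓ R := by
  ext r
  refine and_congr_left fun hrR => ⟨fun hr => ?_, ?_⟩
  · refine mem_range_powMonoidHom_two_iff.2 (isSquare_of_even_padicValRat
      (signParity_fst_eq_one_iff.1 (congrArg Prod.fst hr)) fun p hp => ?_)
    by_cases hpP : p ∈ P
    · have : Fact p.Prime := ⟨hp⟩
      exact padicParity_eq_one_iff.1 (congrFun (congrArg Prod.snd hr) ⟨p, hpP⟩)
    · exact heven p hp hpP r hrR
  · rintro ⟨q, rfl⟩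
    exact sq_mem_ker_signParity q

theorem map_signParity_eq_top {R : Subgroup ℚˣ} (hneg : -1 ∈ R)
    (hmem : ∀ r : ℚˣ, ∀ p ∈ P, (r : ℚ) = p → r ∈ R) : R.map (signParity P) = ⊤ := by
  rw [eq_top_iff]
  rintro ⟨ε, g⟩ -
  have hε : (ε, 1) ∈ R.map (signParity P) := by
    have : ∀ ε : SignTypeˣ, ε = 1 ∨ ε = -1 := by decide
    rcases this ε with rfl | rfl
    · exact one_mem _
    · exact ⟨-1, hneg, signParity_neg_one⟩
  have hg : g ∈ (R.map (signParity P)).comap (MonoidHom.inr _ _) := by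
    refine Subgroup.pi_mem_of_mulSingle_mem g fun p => ?_
    have : ∀ x : Multiplicative (ZMod 2), x = 1 ∨ x = Multiplicative.ofAdd 1 := by decide
    rcases this (g p) with hp | hp
    · rw [hp, Pi.mulSingle_one]
      exact one_mem _
    · have hp0 : ((p : ℕ) : ℚ) ≠ 0 := Nat.cast_ne_zero.2 (Fact.out : (p : ℕ).Prime).ne_zero
      rw [hp]
      exact ⟨Units.mk0 _ hp0, hmem _ p p.2 rfl, signParity_prime p rfl⟩
  simpa using mul_mem hε hg

theorem relIndex_range_powMonoidHom_two_of_primes {R : Subgroup ℚˣ} (hneg : -1 ∈ R)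
    (hmem : ∀ r : ℚˣ, ∀ p ∈ P, (r : ℚ) = p → r ∈ R)
    (heven : ∀ p : ℕ, p.Prime → p ∉ P → ∀ r ∈ R, Even (padicValRat p (r : ℚ))) :
    (powMonoidHom 2 : ℚˣ →* ℚˣ).range.relIndex R = 2 ^ (P.card + 1) := by
  rw [← Subgroup.inf_relIndex_right, ← ker_signParity_inf heven, Subgroup.inf_relIndex_right,
    Subgroup.relIndex_ker, map_signParity_eq_top hneg hmem, Subgroup.card_top, Nat.card_prod,
    Nat.card_fun, pow_succ']
  have hsign : Fintype.card SignTypeˣ = 2 := by decide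
  simp [hsign]

end RationalSquareClasses

section Units

variable (K : Type*) [Field K] [NumberField K]

theorem units_index_range_powMonoidHom {n : ℕ} (hn : n ≠ 0) :
    (powMonoidHom n : (𝓞 K)ˣ →* (𝓞 K)ˣ).range.index =
      (Units.torsionOrder K).gcd n * n ^ Units.rank K := by
  have : IsMulTorsionFree ((𝓞 K)ˣ ⧸ Units.torsion K) :=
    QuotientGroup.instIsMulTorsionFree (𝓞 K)ˣ
  have hB : Function.Injective (powMonoidHom (α := (𝓞 K)ˣ ⧸ Units.torsion K) n) :=
    pow_left_injective hn
  rw [index_range_powMonoidHom_of_surjective (f := QuotientGroup.mk' (Units.torsion K))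
      (QuotientGroup.mk'_surjective _) hB,
    QuotientGroup.ker_mk', IsCyclic.index_powMonoidHom_range, index_range_powMonoidHom_of_free,
    Units.finrank_modTorsion]
  rfl

theorem units_index_range_powMonoidHom_two :
    (powMonoidHom 2 : (𝓞 K)ˣ →* (𝓞 K)ˣ).range.index = 2 ^ (Units.rank K + 1) := by
  rw [units_index_range_powMonoidHom K two_ne_zero,
    Nat.gcd_eq_right (even_iff_two_dvd.1 (Units.even_torsionOrder K)), pow_succ']

end Units

section Selmer

/-- The map that `algebraMap R K` induces on unit groups. -/
noncomputable abbrev algebraMapUnits (R K : Type*) [CommSemiring R] [Semiring K] [Algebra R K] :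
    Rˣ →* Kˣ :=
  Units.map (algebraMap R K).toMonoidHom

variable (R : Type*) [CommRing R] (K : Type*) [Field K] [Algebra R K] [IsFractionRing R K]

theorem ker_toPrincipalIdeal :
    (toPrincipalIdeal R K).ker = (algebraMapUnits R K).range := by
  ext x
  rw [MonoidHom.mem_ker, toPrincipalIdeal_eq_iff, Units.val_one]
  constructor
  · intro hx
    obtain ⟨y, hy⟩ := (FractionalIdeal.mem_one_iff R⁰).1
      (hx ▸ FractionalIdeal.mem_spanSingleton_self R⁰ (x : K))
    obtain ⟨z, hz⟩ := (FractionalIdeal.mem_spanSingleton R⁰).1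
      (hx.symm ▸ FractionalIdeal.one_mem_one R⁰ :
        (1 : K) ∈ FractionalIdeal.spanSingleton R⁰ (x : K))
    have hzy : z * y = 1 := IsFractionRing.injective R K <| by
      rw [map_mul, hy, ← Algebra.smul_def, hz, map_one]
    exact ⟨⟨y, z, by rw [mul_comm, hzy], hzy⟩, Units.ext hy⟩
  · rintro ⟨u, rfl⟩
    have hu := FractionalIdeal.coeIdeal_span_singleton (S := R⁰) (P := K) (u : R)
    rw [Ideal.span_singleton_eq_top.2 u.isUnit, FractionalIdeal.coeIdeal_top] at hu
    exact hu.symm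

variable {R K} in
theorem fractionalIdeal_le_one_of_pow_le_one [IsDomain R] [IsIntegrallyClosed R] {n : ℕ}
    (hn : n ≠ 0) {J : FractionalIdeal R⁰ K} (hJ : J ^ n ≤ 1) : J ≤ 1 := by
  intro x hx
  have hxn : x ^ n ∈ J ^ n := by
    rw [← FractionalIdeal.mem_coe, FractionalIdeal.coe_pow]
    exact Submodule.pow_mem_pow _ hx n
  obtain ⟨y, hy⟩ := (FractionalIdeal.mem_one_iff R⁰).1 (hJ hxn)
  have hint : IsIntegral R (x ^ n) := hy ▸ isIntegral_algebraMap
  obtain ⟨z, hz⟩ := IsIntegrallyClosed.isIntegral_iff.1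
    (hint.of_pow (Nat.pos_of_ne_zero hn))
  exact (FractionalIdeal.mem_one_iff R⁰).2 ⟨z, hz⟩

theorem fractionalIdeal_powMonoidHom_injective [IsDomain R] [IsIntegrallyClosed R] {n : ℕ}
    (hn : n ≠ 0) : Function.Injective
      (powMonoidHom n : (FractionalIdeal R⁰ K)ˣ →* (FractionalIdeal R⁰ K)ˣ) := by
  have le_one {J : (FractionalIdeal R⁰ K)ˣ} (hJ : J ^ n = 1) : (J : FractionalIdeal R⁰ K) ≤ 1 :=
    fractionalIdeal_le_one_of_pow_le_one hn <| by
      rw [← Units.val_pow_eq_pow_val, hJ, Units.val_one]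
  rw [injective_iff_map_eq_one]
  intro J hJ
  rw [powMonoidHom_apply] at hJ
  refine Units.ext (le_antisymm (le_one hJ) ?_)
  calc (1 : FractionalIdeal R⁰ K) = J * (J⁻¹ : (FractionalIdeal R⁰ K)ˣ) := J.mul_inv.symm
    _ ≤ J * 1 := mul_le_mul_right (le_one (by rw [inv_pow, hJ, inv_one])) _
    _ = J := mul_one _

/-- The elements of `Kˣ` that generate the `n`-th power of an invertible fractional ideal. Over a
Dedekind domain this is the preimage in `Kˣ` of the subgroup `K⟮∅, n⟯` of `Kˣ / (Kˣ)ⁿ`. -/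
noncomputable def selmer (n : ℕ) : Subgroup Kˣ :=
  (powMonoidHom n : (FractionalIdeal R⁰ K)ˣ →* _).range.comap (toPrincipalIdeal R K)

theorem relIndex_range_powMonoidHom_selmer [IsDomain R] [IsIntegrallyClosed R] {n : ℕ}
    (hn : n ≠ 0) :
    (powMonoidHom n : Kˣ →* Kˣ).range.relIndex (selmer R K n) =
      (powMonoidHom n : Rˣ →* Rˣ).range.index *
        Nat.card (powMonoidHom n : ClassGroup R →* ClassGroup R).ker := by
  have hinj : Function.Injective (algebraMapUnits R K) :=
    Units.map_injective (IsFractionRing.injective R K)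
  rw [selmer, relIndex_comap_range_powMonoidHom
      (C := (FractionalIdeal R⁰ K)ˣ ⧸ (toPrincipalIdeal R K).range) (toPrincipalIdeal R K)
      (QuotientGroup.mk' _) (QuotientGroup.mk'_surjective _) (QuotientGroup.ker_mk' _)
      (fractionalIdeal_powMonoidHom_injective R K hn),
    index_range_powMonoidHom_congr ((MonoidHom.ofInjective hinj).trans
      (MulEquiv.subgroupCongr (ker_toPrincipalIdeal R K).symm)),
    card_ker_powMonoidHom_congr (ClassGroup.equiv (R := R) K).symm]

variable {R K}

theorem range_powMonoidHom_le_selmer (n : ℕ) :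
    (powMonoidHom n : Kˣ →* Kˣ).range ≤ selmer R K n := by
  rintro _ ⟨x, rfl⟩
  exact ⟨toPrincipalIdeal R K x, (map_pow (toPrincipalIdeal R K) x n).symm⟩

theorem mem_selmer_of_pow_eq_span_singleton {n : ℕ} {x : Kˣ} {y : R}
    (hxy : (x : K) = algebraMap R K y) {I : Ideal R} (hI : I ^ n = Ideal.span {y}) :
    x ∈ selmer R K n := by
  have hpow : (I : FractionalIdeal R⁰ K) ^ n = FractionalIdeal.spanSingleton R⁰ (x : K) := by
    rw [← FractionalIdeal.coeIdeal_pow, hI, FractionalIdeal.coeIdeal_span_singleton, hxy]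
  have hunit : IsUnit ((I : FractionalIdeal R⁰ K) ^ n) :=
    hpow ▸ coe_toPrincipalIdeal (R := R) x ▸ (toPrincipalIdeal R K x).isUnit
  rcases eq_or_ne n 0 with rfl | hn
  · exact ⟨1, Units.ext (by simpa using hpow)⟩
  · obtain ⟨J, hJ⟩ := (isUnit_pow_iff hn).1 hunit
    exact ⟨J, Units.ext (by simpa [hJ] using hpow)⟩

theorem mem_selmer_of_isCoprime [IsDedekindDomain R] {n : ℕ} {x : Kˣ} {y z w : R}
    (hxy : (x : K) = algebraMap R K y) (hyz : IsCoprime y z) (h : y * z = w ^ n) :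
    x ∈ selmer R K n := by
  obtain ⟨I, hI⟩ := exists_eq_pow_of_mul_eq_pow_of_coprime
    (Ideal.isCoprime_span_singleton_iff y z |>.2 hyz) (c := Ideal.span {w}) (n := n)
    (by rw [Ideal.span_singleton_mul_span_singleton, h, Ideal.span_singleton_pow])
  exact mem_selmer_of_pow_eq_span_singleton hxy hI.symm

theorem range_algebraMapUnits_le_selmer (n : ℕ) :
    (algebraMapUnits R K).range ≤ selmer R K n := by
  rw [← ker_toPrincipalIdeal]
  exact MonoidHom.ker_le_comap _ _

theorem dvd_count_of_mem_selmer [IsDedekindDomain R] {n : ℕ} {x : Kˣ} (hx : x ∈ selmer R K n)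
    (v : IsDedekindDomain.HeightOneSpectrum R) :
    (n : ℤ) ∣ FractionalIdeal.count K v (FractionalIdeal.spanSingleton R⁰ (x : K)) := by
  obtain ⟨J, hJ⟩ := hx
  rw [← coe_toPrincipalIdeal, ← hJ, powMonoidHom_apply, Units.val_pow_eq_pow_val,
    FractionalIdeal.count_pow]
  exact dvd_mul_right _ _

end Selmer

section NumberField

variable {K : Type*} [Field K] [NumberField K]

theorem relIndex_range_powMonoidHom_two_selmer (K : Type*) [Field K] [NumberField K] :
    (powMonoidHom 2 : Kˣ →* Kˣ).range.relIndex (selmer (𝓞 K) K 2) =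
      2 ^ (Units.rank K + 1) *
        Nat.card (ClassGroup (𝓞 K) ⧸ (powMonoidHom 2 : ClassGroup (𝓞 K) →* _).range) := by
  rw [relIndex_range_powMonoidHom_selmer _ _ two_ne_zero, units_index_range_powMonoidHom_two,
    card_quotient_range_powMonoidHom]

theorem exists_abs_norm_eq_pow_of_mem_selmer {n : ℕ} {x : Kˣ} (hx : x ∈ selmer (𝓞 K) K n) :
    ∃ q : ℚ, |Algebra.norm ℚ (x : K)| = q ^ n := by
  obtain ⟨J, hJ⟩ := hx
  refine ⟨FractionalIdeal.absNorm (J : FractionalIdeal (𝓞 K)⁰ K), ?_⟩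
  rw [← FractionalIdeal.absNorm_span_singleton (𝓞 K), ← coe_toPrincipalIdeal, ← hJ,
    powMonoidHom_apply, Units.val_pow_eq_pow_val, map_pow]

theorem neg_one_mem_selmer (n : ℕ) : (-1 : Kˣ) ∈ selmer (𝓞 K) K n :=
  range_algebraMapUnits_le_selmer n ⟨-1, Units.ext (by simp)⟩

end NumberField

section SqrtGenerator

theorem adjoin_gen_eq_top {F E : Type*} [Field F] [Field E] [Algebra F E] (α : E) :
    F⟮AdjoinSimple.gen F α⟯ = ⊤ :=
  lift_injective _ (by rw [lift_adjoin_simple, lift_top, AdjoinSimple.coe_gen])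

/-- `K` is obtained from its subfield `F` by adjoining `s`, a square root of the nonsquare `d`. -/
structure IsSqrtGenerator {F K : Type*} [Field F] [Field K] [Algebra F K] (d : F) (s : K) :
    Prop where
  sq_eq : s ^ 2 = algebraMap F K d
  not_isSquare : ¬ IsSquare d
  adjoin_eq_top : F⟮s⟯ = ⊤

namespace IsSqrtGenerator

variable {F K : Type*} [Field F] [Field K] [Algebra F K] {d : F} {s : K}

theorem ne_zero (h : IsSqrtGenerator d s) : d ≠ 0 :=
  fun hd => h.not_isSquare (hd ▸ IsSquare.zero)

theorem algebraAdjoin_eq_top (h : IsSqrtGenerator d s) : Algebra.adjoin F {s} = ⊤ := by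
  have hs : IsIntegral F s := .of_pow two_pos (h.sq_eq ▸ isIntegral_algebraMap)
  exact (adjoin_simple_eq_top_iff_of_isAlgebraic hs.isAlgebraic).1 h.adjoin_eq_top

theorem exists_eq (h : IsSqrtGenerator d s) (x : K) :
    ∃ a b : F, x = algebraMap F K a + algebraMap F K b * s := by
  have hx : x ∈ Algebra.adjoin F {s} := h.algebraAdjoin_eq_top ▸ Algebra.mem_top
  induction hx using Algebra.adjoin_induction with
  | mem x hx => exact ⟨0, 1, by simpa using hx⟩
  | algebraMap r => exact ⟨r, 0, by simp⟩
  | add x y _ _ hx hy =>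
    obtain ⟨a, b, rfl⟩ := hx
    obtain ⟨a', b', rfl⟩ := hy
    exact ⟨a + a', b + b', by simp only [map_add]; ring⟩
  | mul x y _ _ hx hy =>
    obtain ⟨a, b, rfl⟩ := hx
    obtain ⟨a', b', rfl⟩ := hy
    refine ⟨a * a' + d * (b * b'), a * b' + b * a', ?_⟩
    simp only [map_add, map_mul]
    linear_combination algebraMap F K b * algebraMap F K b' * h.sq_eq

theorem eq_zero_of_add_mul_eq_zero (h : IsSqrtGenerator d s) {a b : F}
    (hab : algebraMap F K a + algebraMap F K b * s = 0) : a = 0 ∧ b = 0 := by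
  have hnorm : a * a = d * (b * b) := (algebraMap F K).injective <| by
    simp only [map_mul]
    linear_combination (algebraMap F K a - algebraMap F K b * s) * hab +
      algebraMap F K b * algebraMap F K b * h.sq_eq
  have hb : b = 0 := by
    by_contra hb
    exact h.not_isSquare ⟨a / b, by field_simp; rw [sq, sq, hnorm]⟩
  subst hb
  simpa using hab

/-- The basis `1, s` of `K` over `F`. -/
noncomputable def basis (h : IsSqrtGenerator d s) : Module.Basis (Fin 2) F K :=
  .mk (v := ![1, s])
    (LinearIndependent.pair_iff.2 fun a b hab =>
      h.eq_zero_of_add_mul_eq_zero (by simpa [Algebra.smul_def] using hab))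
    fun x _ => by
      obtain ⟨a, b, rfl⟩ := h.exists_eq x
      rw [Matrix.range_cons_cons_empty]
      exact Submodule.mem_span_pair.2 ⟨a, b, by simp [Algebra.smul_def]⟩

theorem basis_zero (h : IsSqrtGenerator d s) : h.basis 0 = 1 := by simp [basis]

theorem basis_one (h : IsSqrtGenerator d s) : h.basis 1 = s := by simp [basis]

theorem finrank_eq_two (h : IsSqrtGenerator d s) : Module.finrank F K = 2 := by
  rw [Module.finrank_eq_card_basis h.basis, Fintype.card_fin]

theorem repr_add_mul (h : IsSqrtGenerator d s) (a b : F) :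
    ⇑(h.basis.repr (algebraMap F K a + algebraMap F K b * s)) = ![a, b] := by
  have : algebraMap F K a + algebraMap F K b * s = h.basis.equivFun.symm ![a, b] := by
    simp [Module.Basis.equivFun_symm_apply, Fin.sum_univ_two, basis_zero, basis_one,
      Algebra.smul_def]
  rw [this, ← Module.Basis.equivFun_apply, LinearEquiv.apply_symm_apply]

theorem norm_add_mul (h : IsSqrtGenerator d s) (a b : F) :
    Algebra.norm F (algebraMap F K a + algebraMap F K b * s) = a ^ 2 - d * b ^ 2 := by
  have hs : (algebraMap F K a + algebraMap F K b * s) * s =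
      algebraMap F K (d * b) + algebraMap F K a * s := by
    rw [map_mul]
    linear_combination algebraMap F K b * h.sq_eq
  rw [Algebra.norm_eq_matrix_det h.basis, Matrix.det_fin_two]
  simp only [Algebra.leftMulMatrix_eq_repr_mul, basis_zero, basis_one, mul_one, hs, repr_add_mul,
    Matrix.cons_val_zero, Matrix.cons_val_one]
  ring

variable [NeZero (2 : F)]

theorem isSquare_algebraMap_iff (h : IsSqrtGenerator d s) {r : F} :
    IsSquare (algebraMap F K r) ↔ IsSquare r ∨ IsSquare (r * d) := by
  constructor
  · rintro ⟨x, hx⟩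
    obtain ⟨a, b, rfl⟩ := h.exists_eq x
    obtain ⟨hr, hab⟩ := h.eq_zero_of_add_mul_eq_zero (a := a ^ 2 + d * b ^ 2 - r) (b := 2 * (a * b))
      (by
        simp only [map_add, map_sub, map_mul, map_pow, map_ofNat]
        linear_combination -hx - algebraMap F K b ^ 2 * h.sq_eq)
    rcases mul_eq_zero.1 ((mul_eq_zero.1 hab).resolve_left two_ne_zero) with rfl | rfl
    · exact .inr ⟨d * b, by linear_combination -d * hr⟩
    · exact .inl ⟨a, by linear_combination -hr⟩
  · rintro (hr | ⟨q, hq⟩)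
    · exact hr.map (algebraMap F K)
    · have hs : s ≠ 0 := by
        rintro rfl
        exact h.ne_zero (by simpa using h.sq_eq.symm)
      refine ⟨algebraMap F K q / s, ?_⟩
      have := congrArg (algebraMap F K) hq
      simp only [map_mul, ← h.sq_eq] at this
      field_simp
      linear_combination this

theorem relIndex_range_powMonoidHom_comap (h : IsSqrtGenerator d s) :
    (powMonoidHom 2 : Fˣ →* Fˣ).range.relIndex
      ((powMonoidHom 2 : Kˣ →* Kˣ).range.comap (algebraMapUnits F K)) = 2 := by
  have hmem (r : Fˣ) : r ∈ (powMonoidHom 2 : Kˣ →* Kˣ).range.comap (algebraMapUnits F K) ↔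
      IsSquare (r : F) ∨ IsSquare (r * d : F) := by
    rw [Subgroup.mem_comap, mem_range_powMonoidHom_two_iff, ← h.isSquare_algebraMap_iff]
    rfl
  refine Subgroup.relIndex_eq_two_iff_exists_notMem_and.2 ⟨Units.mk0 d h.ne_zero,
    (hmem _).2 (.inr (IsSquare.mul_self d)), ?_, fun r hr => ?_⟩
  · rw [mem_range_powMonoidHom_two_iff]
    exact h.not_isSquare
  · simpa only [mem_range_powMonoidHom_two_iff, Units.val_mul, Units.val_mk0, or_comm]
      using (hmem r).1 hr

/-- Hilbert 90 for `x / q`, with the explicit witness `z = x + q`. -/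
theorem exists_eq_mul_sq_of_norm_eq_sq (h : IsSqrtGenerator d s) {x : K} {q : F}
    (hx : Algebra.norm F x = q ^ 2) : ∃ r : F, ∃ z : K, x = algebraMap F K r * z ^ 2 := by
  obtain ⟨a, b, rfl⟩ := h.exists_eq x
  rw [h.norm_add_mul] at hx
  by_cases haq : a + q = 0
  · obtain rfl : a = -q := eq_neg_of_add_eq_zero_left haq
    have hb : d * b ^ 2 = 0 := by linear_combination -hx
    obtain rfl : b = 0 := by simpa [h.ne_zero] using hb
    exact ⟨-q, 1, by simp⟩
  · refine ⟨(2 * (a + q))⁻¹, algebraMap F K (a + q) + algebraMap F K b * s, ?_⟩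
    have haqK : algebraMap F K a + algebraMap F K q ≠ 0 := by
      rwa [← map_add, map_ne_zero]
    have h2 : (2 : K) ≠ 0 := by
      rw [← map_ofNat (algebraMap F K) 2]
      exact (map_ne_zero _).2 two_ne_zero
    have hxK := congrArg (algebraMap F K) hx
    simp only [map_sub, map_mul, map_pow] at hxK
    simp only [map_inv₀, map_mul, map_add, map_ofNat]
    field_simp
    linear_combination (-algebraMap F K b ^ 2) * h.sq_eq + hxK

end IsSqrtGenerator

end SqrtGenerator

section RationalValuations

theorem intCast_mem_iff_natCast_dvd {R : Type*} [CommRing R] {p : ℕ} (hp : p.Prime) {P : Ideal R}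
    (hP : P ≠ ⊤) (hpP : (p : R) ∈ P) {n : ℤ} : (n : R) ∈ P ↔ (p : ℤ) ∣ n := by
  have hmax : (Ideal.span {(p : ℤ)}).IsMaximal :=
    PrincipalIdealRing.isMaximal_of_irreducible (Nat.prime_iff_prime_int.1 hp).irreducible
  have hle : Ideal.span {(p : ℤ)} ≤ P.comap (Int.castRingHom R) := by
    simpa [Ideal.span_singleton_le_iff_mem] using hpP
  rw [← Ideal.mem_span_singleton, hmax.eq_of_le (Ideal.comap_ne_top _ hP) hle, Ideal.mem_comap,
    eq_intCast]

variable {R K : Type*} [CommRing R] [IsDedekindDomain R] [Field K] [Algebra R K]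
  [IsFractionRing R K]

open IsDedekindDomain FractionalIdeal

theorem count_spanSingleton_algebraMap (v : HeightOneSpectrum R) {x : R} {k : ℕ}
    (hx : x ∈ v.asIdeal ^ k) (hx' : x ∉ v.asIdeal ^ (k + 1)) :
    count K v (spanSingleton R⁰ (algebraMap R K x)) = k := by
  classical
  have hx0 : Ideal.span {x} ≠ 0 := by
    rw [Ne, Ideal.zero_eq_bot, Ideal.span_singleton_eq_bot]
    exact fun h0 => hx' (h0 ▸ zero_mem _)
  rw [← coeIdeal_span_singleton, count_coe K v hx0,
    Ideal.count_associates_factors_eq hx0 v.isPrime v.ne_bot, Nat.cast_inj]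
  exact UniqueFactorizationMonoid.count_normalizedFactors_eq v.irreducible (normalize_eq _)
    (Ideal.dvd_span_singleton.2 hx) (mt Ideal.dvd_span_singleton.1 hx')

theorem count_spanSingleton_ratCast [CharZero K] (v : HeightOneSpectrum R) {p : ℕ}
    [hp : Fact p.Prime] (hpv : (p : R) ∈ v.asIdeal) (hpv2 : (p : R) ∉ v.asIdeal ^ 2) {r : ℚ}
    (hr : r ≠ 0) : count K v (spanSingleton R⁰ (r : K)) = padicValRat p r := by
  have mul {x y : K} (hx : x ≠ 0) (hy : y ≠ 0) : count K v (spanSingleton R⁰ (x * y)) =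
      count K v (spanSingleton R⁰ x) + count K v (spanSingleton R⁰ y) := by
    rw [← spanSingleton_mul_spanSingleton, count_mul K v (spanSingleton_ne_zero_iff.2 hx)
      (spanSingleton_ne_zero_iff.2 hy)]
  have prime : count K v (spanSingleton R⁰ (p : K)) = 1 := by
    simpa using count_spanSingleton_algebraMap (K := K) v (k := 1) (by simpa using hpv) hpv2
  have coprime {n : ℤ} (hn : ¬ (p : ℤ) ∣ n) : count K v (spanSingleton R⁰ (n : K)) = 0 := by
    simpa using count_spanSingleton_algebraMap (K := K) v (x := n) (k := 0) (by simp)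
      (by simpa [intCast_mem_iff_natCast_dvd hp.out v.isPrime.ne_top hpv] using hn)
  have int {n : ℤ} (hn : n ≠ 0) :
      count K v (spanSingleton R⁰ (n : K)) = padicValRat p n := by
    obtain ⟨m, hm, hpm⟩ :=
      (padicValRat.finite_int_prime_iff (p := p).2 hn).exists_eq_pow_mul_and_not_dvd
    set k := multiplicity (p : ℤ) n
    have hm0 : m ≠ 0 := fun h0 => hpm (h0 ▸ dvd_zero _)
    have hp0 := hp.out.ne_zero
    rw [hm]
    push_cast
    rw [mul (by positivity) (by exact_mod_cast hm0), coprime hpm, ← spanSingleton_pow, count_pow,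
      prime, padicValRat.mul (by positivity) (by exact_mod_cast hm0), padicValRat.pow,
      padicValRat.self hp.out.one_lt, padicValRat.of_int, padicValInt.eq_zero_of_not_dvd hpm,
      Nat.cast_zero]
  have hden : (r.den : ℤ) ≠ 0 := by exact_mod_cast r.den_nz
  have hnum := int (Rat.num_ne_zero.2 hr)
  rw [← Rat.mul_den_eq_num, padicValRat.mul hr (by exact_mod_cast hden)] at hnum
  have hrK : (r.num : K) = r * (r.den : ℤ) := by exact_mod_cast (Rat.mul_den_eq_num r).symm
  rw [hrK, mul (by exact_mod_cast hr) (by exact_mod_cast hden), int hden] at hnum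
  exact add_right_cancel hnum

end RationalValuations

section SumsOfTwoSquares

theorem even_padicValRat_sq_add_sq {p : ℕ} [hp : Fact p.Prime] (hp3 : p % 4 = 3) {a b : ℚ}
    (hab : a ^ 2 + b ^ 2 ≠ 0) : Even (padicValRat p (a ^ 2 + b ^ 2)) := by
  set n := (a.num * b.den).natAbs ^ 2 + (b.num * a.den).natAbs ^ 2 with hn
  have hna : (n : ℚ) = (a ^ 2 + b ^ 2) * ((a.den * b.den : ℕ) : ℚ) ^ 2 := by
    have hnum (c : ℚ) : (c.num : ℚ) = c * c.den := (Rat.mul_den_eq_num c).symm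
    simp only [hn, Nat.cast_add, Nat.cast_pow, Nat.cast_natAbs, Int.cast_abs, sq_abs, Int.cast_mul,
      Int.cast_natCast, Nat.cast_mul, hnum]
    ring
  have hden : a.den * b.den ≠ 0 := mul_ne_zero a.den_nz b.den_nz
  have hn0 : n ≠ 0 := by
    rintro h0
    simp [h0, hab] at hna
  rw [← even_padicValNat_iff_of_eq_mul_sq hab hden hna]
  by_cases hpn : p ∣ n
  · exact Nat.eq_sq_add_sq_iff.1 ⟨_, _, hn⟩ p (Nat.mem_primeFactors.2 ⟨hp.out, hpn, hn0⟩) hp3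
  · simp [padicValNat.eq_zero_of_not_dvd hpn]

variable {d : ℤ}

theorem not_dvd_of_sq_add_sq_eq_mul_sq (hsf : Squarefree d) {a q b : ℚ} (hb : b ≠ 0)
    (habq : a ^ 2 + q ^ 2 = d * b ^ 2) {p : ℕ} (hp : p.Prime) (hp3 : p % 4 = 3) :
    ¬ (p : ℤ) ∣ d := by
  intro hpd
  have : Fact p.Prime := ⟨hp⟩
  have hd : (d : ℚ) ≠ 0 := by exact_mod_cast hsf.ne_zero
  have hval : padicValInt p d = 1 := by
    have hle := (Int.squarefree_natAbs.2 hsf).natFactorization_le_one p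
    rw [Nat.factorization_def _ hp] at hle
    exact hle.antisymm (one_le_padicValNat_of_dvd (Int.natAbs_ne_zero.2 hsf.ne_zero)
      (Int.natCast_dvd.1 hpd))
  have heven := even_padicValRat_sq_add_sq hp3 (habq ▸ mul_ne_zero hd (pow_ne_zero 2 hb))
  rw [habq, padicValRat.mul hd (pow_ne_zero 2 hb), padicValRat.pow, padicValRat.of_int, hval]
    at heven
  grind

theorem isCoprime_of_squarefree_sq_add_sq {a b : ℤ} (h : Squarefree (a ^ 2 + b ^ 2)) :
    IsCoprime a b :=
  IsRelPrime.isCoprime fun c ha hb =>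
    h c (by rw [← sq]; exact dvd_add (pow_dvd_pow_of_dvd ha 2) (pow_dvd_pow_of_dvd hb 2))

theorem exists_eq_sq_add_sq_of_squarefree (hsf : Squarefree d) (hd : 0 < d)
    (h3 : ∀ p : ℕ, p.Prime → p % 4 = 3 → ¬ (p : ℤ) ∣ d) :
    ∃ a b : ℤ, d = a ^ 2 + b ^ 2 ∧ IsCoprime (2 * a) b := by
  obtain ⟨x, y, hxy⟩ : ∃ x y : ℕ, d.natAbs = x ^ 2 + y ^ 2 :=
    Nat.eq_sq_add_sq_iff.2 fun p hp hp3 =>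
      absurd (Int.natCast_dvd.2 (Nat.dvd_of_mem_primeFactors hp))
        (h3 p (Nat.prime_of_mem_primeFactors hp) hp3)
  obtain rfl : d = (x : ℤ) ^ 2 + (y : ℤ) ^ 2 := by
    rw [← Int.natAbs_of_nonneg hd.le, hxy]
    push_cast
    rfl
  have hcop := isCoprime_of_squarefree_sq_add_sq hsf
  rcases Int.even_or_odd (y : ℤ) with hy | hy
  · have hx : Odd (x : ℤ) := by
      rw [← Int.not_even_iff_odd]
      intro hx
      exact absurd (hcop.isUnit_of_dvd' hx.two_dvd hy.two_dvd) (by decide)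
    exact ⟨y, x, add_comm _ _, (Int.isCoprime_two_left.2 hx).mul_left hcop.symm⟩
  · exact ⟨x, y, rfl, (Int.isCoprime_two_left.2 hy).mul_left hcop⟩

end SumsOfTwoSquares

section Different

variable {K : Type*} [Field K] [NumberField K]

theorem aeval_derivative_mem_differentIdeal_of_aeval_eq_zero {x : 𝓞 K}
    (hx : Algebra.adjoin ℚ {(x : K)} = ⊤) {f : Polynomial ℤ} (hf : Polynomial.aeval x f = 0) :
    Polynomial.aeval x f.derivative ∈ differentIdeal ℤ (𝓞 K) := by
  obtain ⟨g, rfl⟩ := minpoly.isIntegrallyClosed_dvd (IsIntegralClosure.isIntegral ℤ K x) hf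
  rw [Polynomial.derivative_mul, map_add, map_mul, map_mul, minpoly.aeval, zero_mul, add_zero]
  exact Ideal.mul_mem_right _ _ (aeval_derivative_mem_differentIdeal ℤ ℚ K x hx)

theorem notMem_sq_of_notMem_differentIdeal {p : ℕ} (hp : p.Prime) {P : Ideal (𝓞 K)}
    {x : 𝓞 K} (hx : x ∈ differentIdeal ℤ (𝓞 K)) (hxP : x ∉ P) :
    (p : 𝓞 K) ∉ P ^ 2 := by
  intro hpP
  have hmax : (Ideal.span {(p : ℤ)}).IsMaximal :=
    PrincipalIdealRing.isMaximal_of_irreducible (Nat.prime_iff_prime_int.1 hp).irreducible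
  have hdvd := pow_sub_one_dvd_differentIdeal ℤ (p := Ideal.span {(p : ℤ)}) P 2
    (by simpa using hp.ne_zero)
    (by
      rw [Ideal.map_span, Set.image_singleton, Ideal.dvd_span_singleton]
      simpa using hpP)
  exact hxP (Ideal.dvd_iff_le.1 (by simpa using hdvd) hx)

theorem exists_heightOneSpectrum_natCast_mem (K : Type*) [Field K] [NumberField K] {p : ℕ}
    (hp : p.Prime) : ∃ v : IsDedekindDomain.HeightOneSpectrum (𝓞 K), (p : 𝓞 K) ∈ v.asIdeal := by
  have hne_top : Ideal.span {(p : 𝓞 K)} ≠ ⊤ := by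
    rw [← Ideal.absNorm_eq_one_iff.ne, Ideal.absNorm_span_natCast]
    simp [hp.ne_one, Module.finrank_pos.ne']
  obtain ⟨P, hP, hpP⟩ := Ideal.exists_le_maximal _ hne_top
  rw [Ideal.span_singleton_le_iff_mem] at hpP
  refine ⟨⟨P, hP.isPrime, ?_⟩, hpP⟩
  rintro rfl
  simp [hp.ne_zero] at hpP

end Different

section QuadraticField

/-- The discriminant of the quadratic field `ℚ(√d)`, for squarefree `d`. -/
def quadraticDiscr (d : ℤ) : ℤ := if d % 4 = 1 then d else 4 * d

theorem quadraticDiscr_ne_zero {d : ℤ} (hd : d ≠ 0) : quadraticDiscr d ≠ 0 := by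
  rw [quadraticDiscr]
  split_ifs
  · exact hd
  · exact mul_ne_zero four_ne_zero hd

theorem natCast_dvd_quadraticDiscr_iff {d : ℤ} {p : ℕ} (hp3 : p % 4 = 3) :
    (p : ℤ) ∣ quadraticDiscr d ↔ (p : ℤ) ∣ d := by
  rw [quadraticDiscr]
  split_ifs
  · rfl
  · refine ⟨fun h => ?_, fun h => h.mul_left _⟩
    have hp4 : p.Coprime (2 ^ 2) := (Nat.coprime_two_right.2 (Nat.odd_iff.2 (by lia))).pow_right 2
    exact hp4.isCoprime.dvd_of_dvd_mul_left h

namespace IsSqrtGenerator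

variable {K : Type*} [Field K] [NumberField K] {d : ℤ} {s : K}

theorem sq_eq_intCast (h : IsSqrtGenerator (d : ℚ) s) : s ^ 2 = d := by
  simpa using h.sq_eq

theorem exists_integer_coe_eq (h : IsSqrtGenerator (d : ℚ) s) :
    ∃ t : 𝓞 K, (t : K) = s ∧ t ^ 2 = d := by
  have hs : IsIntegral ℤ s := .of_pow two_pos (h.sq_eq_intCast ▸ isIntegral_algebraMap)
  obtain ⟨t, rfl⟩ : ∃ t : 𝓞 K, (t : K) = s := ⟨⟨s, hs⟩, rfl⟩
  exact ⟨t, rfl, RingOfIntegers.ext (by simpa using h.sq_eq_intCast)⟩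

theorem exists_two_mul_eq (h : IsSqrtGenerator (d : ℚ) s) {k : ℤ} (hd : d = 4 * k + 1) :
    ∃ ω : 𝓞 K, 2 * (ω : K) = 1 + s ∧ ω ^ 2 - ω - k = 0 := by
  have hs := h.sq_eq_intCast
  rw [hd] at hs
  push_cast at hs
  have hint : IsIntegral ℤ ((1 + s) / 2) := by
    refine ⟨Polynomial.X ^ 2 - Polynomial.X - Polynomial.C k, by monicity!, ?_⟩
    rw [Polynomial.eval₂_sub, Polynomial.eval₂_sub, Polynomial.eval₂_pow, Polynomial.eval₂_X,
      Polynomial.eval₂_C, algebraMap_int_eq, eq_intCast]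
    linear_combination hs / 4
  obtain ⟨ω, hω⟩ : ∃ ω : 𝓞 K, (ω : K) = (1 + s) / 2 := ⟨⟨_, hint⟩, rfl⟩
  refine ⟨ω, by linear_combination 2 * hω, RingOfIntegers.ext ?_⟩
  simp only [map_sub, map_pow, map_intCast, map_zero, hω]
  linear_combination hs / 4

open Polynomial in
theorem exists_mem_differentIdeal (h : IsSqrtGenerator (d : ℚ) s) :
    ∃ x ∈ differentIdeal ℤ (𝓞 K), x ^ 2 = (quadraticDiscr d : 𝓞 K) := by
  obtain ⟨t, rfl, ht⟩ := h.exists_integer_coe_eq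
  rw [quadraticDiscr]
  split_ifs with hd
  · obtain ⟨k, hk⟩ : ∃ k, d = 4 * k + 1 := ⟨d / 4, by lia⟩
    obtain ⟨ω, hω, hω'⟩ := h.exists_two_mul_eq hk
    have hadj : Algebra.adjoin ℚ {(ω : K)} = ⊤ := by
      rw [← top_le_iff, ← h.algebraAdjoin_eq_top, Algebra.adjoin_le_iff, Set.singleton_subset_iff]
      have : (t : K) = (2 : ℚ) • (ω : K) - 1 := by
        rw [Algebra.smul_def]
        simp [hω]
      rw [SetLike.mem_coe, this]
      exact sub_mem (Subalgebra.smul_mem _ (Algebra.self_mem_adjoin_singleton _ _) _) (one_mem _)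
    refine ⟨t, ?_, ht⟩
    have hf' : aeval ω (derivative (X ^ 2 - X - C k)) = t := RingOfIntegers.ext <| by
      rw [eq_sub_of_add_eq' hω.symm]
      simp [one_add_one_eq_two, map_ofNat]
    exact hf' ▸ aeval_derivative_mem_differentIdeal_of_aeval_eq_zero hadj (by simpa using hω')
  · have hf' : aeval t (derivative (X ^ 2 - C d)) = 2 * t := by
      simp [one_add_one_eq_two, map_ofNat]
    refine ⟨2 * t, ?_, by push_cast; rw [← ht]; ring⟩
    exact hf' ▸ aeval_derivative_mem_differentIdeal_of_aeval_eq_zero h.algebraAdjoin_eq_top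
      (by simp [ht])

theorem even_padicValRat_of_mem_selmer (h : IsSqrtGenerator (d : ℚ) s) {p : ℕ} [hp : Fact p.Prime]
    (hpd : ¬ (p : ℤ) ∣ quadraticDiscr d) {r : ℚˣ}
    (hr : algebraMapUnits ℚ K r ∈ selmer (𝓞 K) K 2) : Even (padicValRat p (r : ℚ)) := by
  obtain ⟨x, hx, hxd⟩ := h.exists_mem_differentIdeal
  obtain ⟨v, hpv⟩ := exists_heightOneSpectrum_natCast_mem K hp.out
  have hxv : x ∉ v.asIdeal := fun hxv => hpd <| by
    rw [← intCast_mem_iff_natCast_dvd hp.out v.isPrime.ne_top hpv, ← hxd]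
    exact Ideal.pow_mem_of_mem _ hxv 2 two_pos
  have hcount := count_spanSingleton_ratCast (K := K) v hpv
    (notMem_sq_of_notMem_differentIdeal hp.out hx hxv) r.ne_zero
  rw [even_iff_two_dvd, ← hcount]
  simpa using dvd_count_of_mem_selmer hr v

theorem mem_selmer_of_dvd (h : IsSqrtGenerator (d : ℚ) s) (hsf : Squarefree d) {p : ℤ}
    (hpd : p ∣ d) {x : Kˣ} (hx : (x : K) = p) : x ∈ selmer (𝓞 K) K 2 := by
  obtain ⟨k, rfl⟩ := hpd
  obtain ⟨t, -, ht⟩ := h.exists_integer_coe_eq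
  have hcop : IsCoprime (p : 𝓞 K) k := (squarefree_mul_iff.1 hsf).1.isCoprime.intCast
  exact mem_selmer_of_isCoprime (w := t) (by simpa using hx) hcop (by rw [ht]; push_cast; rfl)

theorem two_mem_selmer (h : IsSqrtGenerator (d : ℚ) s) (hd : d % 4 = 3) {x : Kˣ}
    (hx : (x : K) = 2) : x ∈ selmer (𝓞 K) K 2 := by
  obtain ⟨k, rfl⟩ : ∃ k, d = 4 * k + 3 := ⟨d / 4, by lia⟩
  obtain ⟨t, -, ht⟩ := h.exists_integer_coe_eq
  push_cast at ht
  refine mem_selmer_of_isCoprime (y := 2) (z := 2 * k + 2 + t) (w := 1 + t)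
    (by simpa [map_ofNat] using hx)
    ⟨-(2 * k ^ 2 + 2 * k), 2 * k + 2 - t, ?_⟩ ?_
  · linear_combination -ht
  · linear_combination -ht

theorem mem_selmer_of_dvd_quadraticDiscr (h : IsSqrtGenerator (d : ℚ) s) (hsf : Squarefree d)
    {p : ℕ} (hp : p.Prime) (hpd : (p : ℤ) ∣ quadraticDiscr d) {x : Kˣ} (hx : (x : K) = p) :
    x ∈ selmer (𝓞 K) K 2 := by
  by_cases hpd' : (p : ℤ) ∣ d
  · exact h.mem_selmer_of_dvd hsf hpd' (by simpa using hx)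
  · rw [quadraticDiscr] at hpd
    split_ifs at hpd with hd
    · exact absurd hpd hpd'
    · have hp4 : p ∣ 2 ^ 2 := by
        exact_mod_cast ((Nat.prime_iff_prime_int.1 hp).dvd_or_dvd hpd).resolve_right hpd'
      obtain rfl := (Nat.prime_dvd_prime_iff_eq hp Nat.prime_two).1 (hp.dvd_of_dvd_pow hp4)
      exact h.two_mem_selmer (by lia) (by simpa using hx)

theorem relIndex_range_powMonoidHom_two_comap_selmer (h : IsSqrtGenerator (d : ℚ) s)
    (hsf : Squarefree d) :
    (powMonoidHom 2 : ℚˣ →* ℚˣ).range.relIndex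
      ((selmer (𝓞 K) K 2).comap (algebraMapUnits ℚ K)) =
      2 ^ ((quadraticDiscr d).natAbs.primeFactors.card + 1) := by
  have (p : (quadraticDiscr d).natAbs.primeFactors) : Fact (p : ℕ).Prime :=
    ⟨Nat.prime_of_mem_primeFactors p.2⟩
  refine relIndex_range_powMonoidHom_two_of_primes
    (P := (quadraticDiscr d).natAbs.primeFactors) ?_ ?_ ?_
  · have : algebraMapUnits ℚ K (-1) = -1 := Units.ext (by simp)
    rw [Subgroup.mem_comap, this]
    exact neg_one_mem_selmer 2
  · intro r p hp hr
    refine h.mem_selmer_of_dvd_quadraticDiscr hsf (Nat.prime_of_mem_primeFactors hp)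
      (Int.natCast_dvd.2 (Nat.dvd_of_mem_primeFactors hp)) ?_
    simp [hr]
  · intro p hp hpn r hr
    have : Fact p.Prime := ⟨hp⟩
    refine h.even_padicValRat_of_mem_selmer (fun hdvd => hpn ?_) hr
    exact Nat.mem_primeFactors.2 ⟨hp, Int.natCast_dvd.1 hdvd,
      Int.natAbs_ne_zero.2 (quadraticDiscr_ne_zero hsf.ne_zero)⟩

end IsSqrtGenerator

/-- The part of `selmer (𝓞 K) K 2` generated by the squares and the rational numbers in it. -/
noncomputable def ratSelmer (K : Type*) [Field K] [NumberField K] : Subgroup Kˣ :=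
  ((selmer (𝓞 K) K 2).comap (algebraMapUnits ℚ K)).map (algebraMapUnits ℚ K) ⊔
    (powMonoidHom 2 : Kˣ →* Kˣ).range

theorem range_powMonoidHom_two_le_ratSelmer (K : Type*) [Field K] [NumberField K] :
    (powMonoidHom 2 : Kˣ →* Kˣ).range ≤ ratSelmer K :=
  le_sup_right

theorem ratSelmer_le_selmer (K : Type*) [Field K] [NumberField K] :
    ratSelmer K ≤ selmer (𝓞 K) K 2 :=
  sup_le (Subgroup.map_comap_le _ _) (range_powMonoidHom_le_selmer 2)

namespace IsSqrtGenerator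

variable {K : Type*} [Field K] [NumberField K] {d : ℤ} {s : K}

theorem relIndex_range_powMonoidHom_two_ratSelmer (h : IsSqrtGenerator (d : ℚ) s)
    (hsf : Squarefree d) :
    (powMonoidHom 2 : Kˣ →* Kˣ).range.relIndex (ratSelmer K) =
      2 ^ (quadraticDiscr d).natAbs.primeFactors.card := by
  have hsq_le : (powMonoidHom 2 : ℚˣ →* ℚˣ).range ≤
      (powMonoidHom 2 : Kˣ →* Kˣ).range.comap (algebraMapUnits ℚ K) := by
    rintro _ ⟨q, rfl⟩
    exact ⟨algebraMapUnits ℚ K q, (map_pow (algebraMapUnits ℚ K) q 2).symm⟩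
  have := Subgroup.relIndex_mul_relIndex _ _ _ hsq_le
    (Subgroup.comap_mono (f := algebraMapUnits ℚ K) (range_powMonoidHom_le_selmer (R := 𝓞 K) 2))
  rw [h.relIndex_range_powMonoidHom_comap, h.relIndex_range_powMonoidHom_two_comap_selmer hsf,
    pow_succ'] at this
  rw [ratSelmer, Subgroup.relIndex_sup_right, ← Subgroup.relIndex_comap]
  exact Nat.eq_of_mul_eq_mul_left two_pos this

theorem norm_pos_of_mem_ratSelmer (h : IsSqrtGenerator (d : ℚ) s) {x : Kˣ}
    (hx : x ∈ ratSelmer K) : 0 < Algebra.norm ℚ (x : K) := by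
  obtain ⟨_, ⟨r, _, rfl⟩, _, ⟨y, rfl⟩, rfl⟩ := Subgroup.mem_sup.1 hx
  have hr : Algebra.norm ℚ (algebraMapUnits ℚ K r : K) = (r : ℚ) ^ 2 := by
    rw [← h.finrank_eq_two, ← Algebra.norm_algebraMap]
    rfl
  rw [Units.val_mul, map_mul, hr, powMonoidHom_apply, Units.val_pow_eq_pow_val, map_pow]
  exact mul_pos (sq_pos_of_ne_zero r.ne_zero)
    (sq_pos_of_ne_zero (Algebra.norm_ne_zero_iff.2 y.ne_zero))

theorem mem_ratSelmer_of_norm_pos (h : IsSqrtGenerator (d : ℚ) s) {x : Kˣ}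
    (hx : x ∈ selmer (𝓞 K) K 2) (hpos : 0 < Algebra.norm ℚ (x : K)) : x ∈ ratSelmer K := by
  obtain ⟨q, hq⟩ := exists_abs_norm_eq_pow_of_mem_selmer hx
  rw [abs_of_pos hpos] at hq
  obtain ⟨r, z, hrz⟩ := h.exists_eq_mul_sq_of_norm_eq_sq hq
  have hne : algebraMap ℚ K r * z ^ 2 ≠ 0 := hrz ▸ x.ne_zero
  have hr : r ≠ 0 := by
    rintro rfl
    simp at hne
  have hz : z ≠ 0 := by
    rintro rfl
    simp at hne
  have hx' : x = algebraMapUnits ℚ K (Units.mk0 r hr) * Units.mk0 z hz ^ 2 := Units.ext hrz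
  rw [hx'] at hx ⊢
  refine Subgroup.mul_mem_sup (Subgroup.mem_map_of_mem _ ?_) ⟨_, rfl⟩
  exact (Subgroup.mul_mem_cancel_right _ (range_powMonoidHom_le_selmer 2 ⟨_, rfl⟩)).1 hx

theorem mem_ratSelmer_iff_norm_pos (h : IsSqrtGenerator (d : ℚ) s) {x : Kˣ}
    (hx : x ∈ selmer (𝓞 K) K 2) : x ∈ ratSelmer K ↔ 0 < Algebra.norm ℚ (x : K) :=
  ⟨h.norm_pos_of_mem_ratSelmer, h.mem_ratSelmer_of_norm_pos hx⟩

theorem exists_sq_add_sq_eq_mul_sq_of_norm_neg (h : IsSqrtGenerator (d : ℚ) s) {x : Kˣ}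
    (hx : x ∈ selmer (𝓞 K) K 2) (hneg : Algebra.norm ℚ (x : K) < 0) :
    ∃ a q b : ℚ, b ≠ 0 ∧ a ^ 2 + q ^ 2 = d * b ^ 2 := by
  obtain ⟨q, hq⟩ := exists_abs_norm_eq_pow_of_mem_selmer hx
  obtain ⟨a, b, hab⟩ := h.exists_eq (x : K)
  rw [abs_of_neg hneg] at hq
  rw [hab, h.norm_add_mul] at hq hneg
  refine ⟨a, q, b, ?_, by linear_combination -hq⟩
  rintro rfl
  nlinarith [sq_nonneg a]

theorem exists_mem_selmer_norm_neg (h : IsSqrtGenerator (d : ℚ) s) {a b : ℤ}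
    (hd : d = a ^ 2 + b ^ 2) (hab : IsCoprime (2 * a) b) :
    ∃ x ∈ selmer (𝓞 K) K 2, Algebra.norm ℚ (x : K) < 0 := by
  have hb : b ≠ 0 := by
    rintro rfl
    exact h.not_isSquare ⟨a, by rw [hd]; push_cast; ring⟩
  have hnorm : Algebra.norm ℚ (a + s) = -(b : ℚ) ^ 2 := by
    have := h.norm_add_mul a 1
    simp only [map_intCast, map_one, one_mul] at this
    rw [this, hd]
    push_cast
    ring
  have hx : a + s ≠ 0 := (Algebra.norm_ne_zero_iff (R := ℚ)).1 (by simp [hnorm, hb])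
  refine ⟨Units.mk0 _ hx, ?_, ?_⟩
  · obtain ⟨t, rfl, ht⟩ := h.exists_integer_coe_eq
    rw [hd] at ht
    push_cast at ht
    obtain ⟨u, v, huv⟩ := (hab.pow_right (n := 2)).intCast (R := 𝓞 K)
    push_cast at huv
    refine mem_selmer_of_isCoprime (y := a + t) (z := t - a) (w := b) (by simp)
      ⟨u + v * (t - a), -u, ?_⟩ ?_
    · linear_combination huv + v * ht
    · linear_combination ht
  · rw [Units.val_mk0, hnorm]
    exact neg_neg_of_pos (by positivity)

theorem relIndex_ratSelmer_eq_one (h : IsSqrtGenerator (d : ℚ) s) (hsf : Squarefree d)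
    (hd : 0 < d → ∃ p : ℕ, p.Prime ∧ p % 4 = 3 ∧ (p : ℤ) ∣ quadraticDiscr d) :
    (ratSelmer K).relIndex (selmer (𝓞 K) K 2) = 1 := by
  refine Subgroup.relIndex_eq_one.2 fun x hx => h.mem_ratSelmer_of_norm_pos hx ?_
  by_contra hnorm
  have hneg := (not_lt.1 hnorm).lt_of_ne (Algebra.norm_ne_zero_iff.2 x.ne_zero)
  obtain ⟨a, q, b, hb, haqb⟩ := h.exists_sq_add_sq_eq_mul_sq_of_norm_neg hx hneg
  have hd_pos : 0 < d := by
    have hd_nonneg : (0 : ℚ) ≤ d :=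
      nonneg_of_mul_nonneg_left (haqb ▸ by positivity) (sq_pos_of_ne_zero hb)
    exact (Int.cast_nonneg_iff.1 hd_nonneg).lt_of_ne' hsf.ne_zero
  obtain ⟨p, hp, hp3, hpd⟩ := hd hd_pos
  exact not_dvd_of_sq_add_sq_eq_mul_sq hsf hb haqb hp hp3
    ((natCast_dvd_quadraticDiscr_iff hp3).1 hpd)

theorem relIndex_ratSelmer_eq_two (h : IsSqrtGenerator (d : ℚ) s) (hsf : Squarefree d)
    (hd : 0 < d) (h3 : ¬ ∃ p : ℕ, p.Prime ∧ p % 4 = 3 ∧ (p : ℤ) ∣ quadraticDiscr d) :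
    (ratSelmer K).relIndex (selmer (𝓞 K) K 2) = 2 := by
  obtain ⟨a, b, hab, hcop⟩ := exists_eq_sq_add_sq_of_squarefree hsf hd fun p hp hp3 hpd =>
    h3 ⟨p, hp, hp3, (natCast_dvd_quadraticDiscr_iff hp3).2 hpd⟩
  obtain ⟨x, hx, hxneg⟩ := h.exists_mem_selmer_norm_neg hab hcop
  refine Subgroup.relIndex_eq_two_iff.2 ⟨x, hx, fun y hy => ?_⟩
  rw [h.mem_ratSelmer_iff_norm_pos hy, h.mem_ratSelmer_iff_norm_pos (mul_mem hy hx),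
    Units.val_mul, map_mul, xor_iff_iff_not, not_lt]
  have hy0 : Algebra.norm ℚ (y : K) ≠ 0 := Algebra.norm_ne_zero_iff.2 y.ne_zero
  exact ⟨fun hyx => (neg_of_mul_pos_left hyx hxneg.le).le,
    fun hle => mul_pos_of_neg_of_neg (hle.lt_of_ne hy0) hxneg⟩

end IsSqrtGenerator

end QuadraticField

section UnitRank

theorem conj_eq_self_of_sq_eq_ofReal {z : ℂ} {x : ℝ} (hx : 0 ≤ x) (hz : z ^ 2 = x) :
    (starRingEnd ℂ) z = z := by
  have hsq : z ^ 2 = (√x : ℂ) ^ 2 := by rw [hz, ← Complex.ofReal_pow, Real.sq_sqrt hx]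
  rcases sq_eq_sq_iff_eq_or_eq_neg.1 hsq with rfl | rfl <;> simp

namespace IsSqrtGenerator

variable {K : Type*} [Field K] [NumberField K] {d : ℤ} {s : K}

theorem isTotallyReal (h : IsSqrtGenerator (d : ℚ) s) (hd : 0 ≤ d) : IsTotallyReal K := by
  refine ⟨fun v => InfinitePlace.isReal_iff.2 (RingHom.ext fun x => ?_)⟩
  obtain ⟨a, b, rfl⟩ := h.exists_eq x
  have hs : v.embedding s ^ 2 = ((d : ℝ) : ℂ) := by
    simpa using congrArg v.embedding h.sq_eq_intCast
  simp [ComplexEmbedding.conjugate_coe_eq,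
    conj_eq_self_of_sq_eq_ofReal (Int.cast_nonneg_iff.2 hd) hs]

theorem isTotallyComplex (h : IsSqrtGenerator (d : ℚ) s) (hd : d < 0) : IsTotallyComplex K := by
  refine ⟨fun v => InfinitePlace.not_isReal_iff_isComplex.1 fun hv => ?_⟩
  have hs := congrArg (InfinitePlace.embedding_of_isReal hv) h.sq_eq_intCast
  rw [map_pow, map_intCast] at hs
  have hd' : (d : ℝ) < 0 := Int.cast_lt_zero.2 hd
  exact (hs ▸ hd').not_ge (sq_nonneg _)

theorem units_rank_of_pos (h : IsSqrtGenerator (d : ℚ) s) (hd : 0 < d) : Units.rank K = 1 := by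
  have := h.isTotallyReal hd.le
  rw [Units.rank, InfinitePlace.card_eq_nrRealPlaces_add_nrComplexPlaces,
    IsTotallyReal.nrComplexPlaces_eq_zero, ← IsTotallyReal.finrank, h.finrank_eq_two]

theorem units_rank_of_neg (h : IsSqrtGenerator (d : ℚ) s) (hd : d < 0) : Units.rank K = 0 := by
  have := h.isTotallyComplex hd
  have hfin := IsTotallyComplex.finrank K
  rw [h.finrank_eq_two] at hfin
  rw [Units.rank, InfinitePlace.card_eq_nrRealPlaces_add_nrComplexPlaces,
    IsTotallyComplex.nrRealPlaces_eq_zero]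
  lia

end IsSqrtGenerator

end UnitRank

section GenusFormula

theorem eq_two_pow_of_two_pow_mul_eq {k m n : ℕ} (h : 2 ^ k * n = 2 ^ m) : n = 2 ^ (m - k) := by
  have hk : k ≤ m := (Nat.pow_dvd_pow_iff_le_right one_lt_two).1 (Dvd.intro _ h)
  rw [← Nat.pow_div hk two_pos, ← h, Nat.mul_div_cancel_left _ (by positivity)]

namespace IsSqrtGenerator

variable {K : Type*} [Field K] [NumberField K] {d : ℤ} {s : K}

theorem two_pow_mul_card_classGroup_quotient (h : IsSqrtGenerator (d : ℚ) s)
    (hsf : Squarefree d) :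
    2 ^ (Units.rank K + 1) *
      Nat.card (ClassGroup (𝓞 K) ⧸ (powMonoidHom 2 : ClassGroup (𝓞 K) →* _).range) =
    2 ^ (quadraticDiscr d).natAbs.primeFactors.card *
      (ratSelmer K).relIndex (selmer (𝓞 K) K 2) := by
  rw [← relIndex_range_powMonoidHom_two_selmer, ← h.relIndex_range_powMonoidHom_two_ratSelmer hsf,
    Subgroup.relIndex_mul_relIndex _ _ _ (range_powMonoidHom_two_le_ratSelmer K)
      (ratSelmer_le_selmer K)]

theorem card_classGroup_quotient_of_exists (h : IsSqrtGenerator (d : ℚ) s)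
    (hsf : Squarefree d) (hd : 0 < d)
    (h3 : ∃ p : ℕ, p.Prime ∧ p % 4 = 3 ∧ (p : ℤ) ∣ quadraticDiscr d) :
    Nat.card (ClassGroup (𝓞 K) ⧸ (powMonoidHom 2 : ClassGroup (𝓞 K) →* _).range) =
      2 ^ ((quadraticDiscr d).natAbs.primeFactors.card - 2) := by
  have hcard := h.two_pow_mul_card_classGroup_quotient hsf
  rw [h.units_rank_of_pos hd, h.relIndex_ratSelmer_eq_one hsf fun _ => h3, mul_one] at hcard
  exact eq_two_pow_of_two_pow_mul_eq hcard

theorem card_classGroup_quotient_of_not_exists (h : IsSqrtGenerator (d : ℚ) s)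
    (hsf : Squarefree d)
    (h3 : ¬ (0 < d ∧ ∃ p : ℕ, p.Prime ∧ p % 4 = 3 ∧ (p : ℤ) ∣ quadraticDiscr d)) :
    Nat.card (ClassGroup (𝓞 K) ⧸ (powMonoidHom 2 : ClassGroup (𝓞 K) →* _).range) =
      2 ^ ((quadraticDiscr d).natAbs.primeFactors.card - 1) := by
  have hcard := h.two_pow_mul_card_classGroup_quotient hsf
  refine eq_two_pow_of_two_pow_mul_eq (k := 1) ?_
  rcases lt_or_gt_of_ne hsf.ne_zero with hd | hd
  · rwa [h.units_rank_of_neg hd, h.relIndex_ratSelmer_eq_one hsf fun hd' => absurd hd' hd.not_gt,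
      mul_one] at hcard
  · rw [h.units_rank_of_pos hd, h.relIndex_ratSelmer_eq_two hsf hd fun hp => h3 ⟨hd, hp⟩,
      pow_succ, mul_right_comm] at hcard
    exact Nat.eq_of_mul_eq_mul_right two_pos hcard

end IsSqrtGenerator

theorem gauss_genus_theorem_general {K : Type*} [Field K] [NumberField K] {d : ℤ}
    (hsf : Squarefree d) (hd1 : d ≠ 1) {s : K} (hs : s ^ 2 = d) (htop : ℚ⟮s⟯ = ⊤) :
    ((0 < d ∧ ∃ p : ℕ, p.Prime ∧ p % 4 = 3 ∧ (p : ℤ) ∣ quadraticDiscr d) →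
        Nat.card (ClassGroup (𝓞 K) ⧸ (powMonoidHom 2 : ClassGroup (𝓞 K) →* _).range) =
          2 ^ ((quadraticDiscr d).natAbs.primeFactors.card - 2)) ∧
      (¬(0 < d ∧ ∃ p : ℕ, p.Prime ∧ p % 4 = 3 ∧ (p : ℤ) ∣ quadraticDiscr d) →
        Nat.card (ClassGroup (𝓞 K) ⧸ (powMonoidHom 2 : ClassGroup (𝓞 K) →* _).range) =
          2 ^ ((quadraticDiscr d).natAbs.primeFactors.card - 1)) :=
  have h : IsSqrtGenerator (d : ℚ) s :=
    ⟨by simpa using hs, not_isSquare_ratCast_of_squarefree hsf hd1, htop⟩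
  ⟨fun h3 => h.card_classGroup_quotient_of_exists hsf h3.1 h3.2,
    h.card_classGroup_quotient_of_not_exists hsf⟩

end GenusFormula

/-- (Gauss's genus theorem.)  For `K = ℚ(√d)` with `d` squarefree,
`d ≠ 0, 1`, discriminant `δ_K` and `m` the number of distinct primes dividing `δ_K`,
the quotient `C_K/C_K²` of the class group by its subgroup of squares has order
`2^(m-2)` if `d > 0` and some prime `p ≡ 3 (mod 4)` divides `δ_K`, and order `2^(m-1)`
otherwise. -/
theorem gauss_genus_theorem
    (d : ℤ) (hsf : Squarefree d) (hd0 : d ≠ 0) (hd1 : d ≠ 1)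
    (c : ℂ) (hc : c ^ 2 = (d : ℂ))
    (K : IntermediateField ℚ ℂ) (hK : K = IntermediateField.adjoin ℚ ({c} : Set ℂ))
    [NumberField K]
    (δ : ℤ) (hδ : δ = if d % 4 = 1 then d else 4 * d)
    (m : ℕ) (hm : m = δ.natAbs.primeFactors.card) :
    ((0 < d ∧ ∃ p : ℕ, p.Prime ∧ p % 4 = 3 ∧ (p : ℤ) ∣ δ) →
        Nat.card (ClassGroup (𝓞 K) ⧸ (powMonoidHom 2 : ClassGroup (𝓞 K) →* _).range) =
          2 ^ (m - 2)) ∧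
      (¬(0 < d ∧ ∃ p : ℕ, p.Prime ∧ p % 4 = 3 ∧ (p : ℤ) ∣ δ) →
        Nat.card (ClassGroup (𝓞 K) ⧸ (powMonoidHom 2 : ClassGroup (𝓞 K) →* _).range) =
          2 ^ (m - 1)) := by
  subst hK hδ hm
  exact gauss_genus_theorem_general hsf hd1 (s := AdjoinSimple.gen ℚ c)
    (Subtype.ext (by simpa using hc)) (adjoin_gen_eq_top c)
end

section
/- Let p be a prime, q a power of p, and k = 𝔽_q(T). For every α ∈ k there exist w ∈ k, an integer r ≥ 0, distinct monic irreducible polynomials P_1, …, P_r ∈ 𝔽_q[T], polynomials Q_1, …, Q_r ∈ 𝔽_q[T], integers e_1, …, e_r ≥ 1, and f ∈ 𝔽_q[T], such that: α = Σ_{i=1}^r Q_i/P_i^{e_i} + f + (w^p − w), and for each i: p ∤ e_i, gcd(Q_i, P_i) = 1, and deg Q_i < e_i · deg P_i; moreover either f ∈ 𝔽_q or p ∤ deg f. (Normalization of Artin–Schreier equations y^p − y = α over k.) -/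
open Polynomial

/-! Write `℘ w = w ^ p - w`. Partial fractions reduce the problem to a single term `a / P ^ n` and
to a polynomial. A term is improved by lowering `n`: cancel if `P ∣ a`; if `p ∣ n`, say `n = p * m`,
the residue field `K[X] / (P)` is perfect, so `a ≡ b ^ p` modulo `P`, and subtracting
`℘ (b / P ^ m)` from `a / P ^ n` leaves a pole of order less than `n`. Once neither applies,
division of the numerator by the denominator restores properness, at the cost of a polynomial.
The same argument at infinity, where the residue field is `K`, normalizes the polynomial part. -/

section ArtinSchreierHom

/-- The Artin–Schreier operator `℘ w = w ^ p - w`, as an additive endomorphism of a ring of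
exponential characteristic `p`; `y ^ p - y = α` defines the same extension for all `α` in a
coset of its range. -/
def artinSchreierHom (R : Type*) [CommRing R] (p : ℕ) [ExpChar R p] : R →+ R :=
  (frobenius R p : R →+ R) - AddMonoidHom.id R

variable {R S : Type*} [CommRing R] [CommRing S] (p : ℕ)

theorem artinSchreierHom_apply [ExpChar R p] (w : R) : artinSchreierHom R p w = w ^ p - w :=
  rfl

theorem map_artinSchreierHom [ExpChar R p] [ExpChar S p] (φ : R →+* S) (w : R) :
    φ (artinSchreierHom R p w) = artinSchreierHom S p (φ w) := by
  simp only [artinSchreierHom_apply, map_sub, map_pow]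

end ArtinSchreierHom

section PoleReduction

variable {R F : Type*} [CommRing R] [Field F] [Algebra R F] {π : R}

theorem exists_div_pow_eq_of_dvd (hπ : algebraMap R F π ≠ 0) {a : R} (ha : π ∣ a) (n : ℕ) :
    ∃ c : R, algebraMap R F a / algebraMap R F (π ^ (n + 1)) =
      algebraMap R F c / algebraMap R F (π ^ n) := by
  obtain ⟨c, rfl⟩ := ha
  exact ⟨c, by rw [pow_succ', map_mul, map_mul, mul_div_mul_left _ _ hπ]⟩

variable (p : ℕ) [Fact p.Prime] [CharP F p]

theorem exists_div_pow_eq_add_artinSchreierHom_of_dvd_sub_pow (hπ : algebraMap R F π ≠ 0)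
    {a b : R} (hab : π ∣ a - b ^ p) {n : ℕ} (hn : p ∣ n + 1) :
    ∃ (c : R) (w : F), algebraMap R F a / algebraMap R F (π ^ (n + 1)) =
      algebraMap R F c / algebraMap R F (π ^ n) + artinSchreierHom F p w := by
  obtain ⟨c, hc⟩ := hab
  obtain ⟨m, hm⟩ := hn
  obtain ⟨t, rfl⟩ : ∃ t, n = m + t := by
    have : 2 * m ≤ p * m := Nat.mul_le_mul_right m (Fact.out : p.Prime).two_le
    exact Nat.exists_eq_add_of_le (by lia)
  refine ⟨c + b * π ^ t, algebraMap R F b / algebraMap R F π ^ m, ?_⟩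
  have frobenius_part : (algebraMap R F b / algebraMap R F π ^ m) ^ p =
      algebraMap R F b ^ p / algebraMap R F π ^ (m + t + 1) := by
    rw [div_pow, ← pow_mul, hm, mul_comm]
  rw [artinSchreierHom_apply, frobenius_part, eq_add_of_sub_eq hc]
  simp only [map_add, map_mul, map_pow]
  field_simp
  ring

theorem exists_div_pow_eq_add_artinSchreierHom (hπ : algebraMap R F π ≠ 0)
    (hpow : ∀ a : R, ∃ b : R, π ∣ a - b ^ p) (a : R) (n : ℕ) :
    ∃ (c : R) (e : ℕ) (w : F), (e ≠ 0 → ¬ p ∣ e ∧ ¬ π ∣ c) ∧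
      algebraMap R F a / algebraMap R F (π ^ n) =
        algebraMap R F c / algebraMap R F (π ^ e) + artinSchreierHom F p w := by
  induction n generalizing a with
  | zero => exact ⟨a, 0, 0, fun h ↦ absurd rfl h, by rw [map_zero, add_zero]⟩
  | succ n ih =>
    by_cases hπa : π ∣ a
    · obtain ⟨c, hc⟩ := exists_div_pow_eq_of_dvd hπ hπa n
      simpa only [hc] using ih c
    by_cases hpn : p ∣ n + 1
    · obtain ⟨b, hb⟩ := hpow a
      obtain ⟨c, v, hc⟩ := exists_div_pow_eq_add_artinSchreierHom_of_dvd_sub_pow p hπ hb hpn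
      obtain ⟨d, e, w, hd, hcd⟩ := ih c
      exact ⟨d, e, w + v, hd, by rw [hc, hcd, map_add, add_assoc]⟩
    · exact ⟨a, n + 1, 0, fun _ ↦ ⟨hpn, hπa⟩, by rw [map_zero, add_zero]⟩

end PoleReduction

section PartialFractions

variable {K F : Type*} [Field K] [Field F] [Algebra K[X] F] [FaithfulSMul K[X] F]

theorem exists_div_eq_add_sum_div_irreducible_pow (f : K[X]) {g : K[X]} (hg : g.Monic) :
    ∃ (s : Finset K[X]) (n : K[X] → ℕ) (h : K[X]) (a : K[X] → K[X]),
      (∀ P ∈ s, P.Monic ∧ Irreducible P) ∧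
      algebraMap K[X] F f / algebraMap K[X] F g = algebraMap K[X] F h +
        ∑ P ∈ s, algebraMap K[X] F (a P) / algebraMap K[X] F (P ^ n P) := by
  classical
  let factors := UniqueFactorizationMonoid.normalizedFactors g
  have hfactors : ∀ P ∈ factors.toFinset, P.Monic ∧ Irreducible P := fun P hP ↦
    have hP' := (Polynomial.mem_normalizedFactors_iff hg.ne_zero).1 (Multiset.mem_toFinset.1 hP)
    ⟨hP'.2.1, hP'.1⟩
  have hprod : ∏ P ∈ factors.toFinset, P ^ factors.count P = g := by
    rw [← Finset.prod_multiset_count]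
    simpa only [hg.leadingCoeff, map_one, one_mul] using leadingCoeff_mul_prod_normalizedFactors g
  have hcoprime : Set.Pairwise factors.toFinset
      fun P R ↦ IsCoprime (P ^ factors.count P) (R ^ factors.count R) := fun P hP R hR hPR ↦
    have ⟨hPm, hPi⟩ := hfactors P hP
    have ⟨hRm, hRi⟩ := hfactors R hR
    IsCoprime.pow <| hPi.coprime_iff_not_dvd.2 fun hdvd ↦
      hPR <| eq_of_monic_of_associated hPm hRm <| hPi.associated_of_dvd hRi hdvd
  obtain ⟨h, a, -, hfg⟩ := div_prod_eq_quo_add_sum_rem_div F f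
    (fun P hP ↦ (hfactors P hP).1.pow (factors.count P)) hcoprime
  refine ⟨factors.toFinset, factors.count, h, a, hfactors, ?_⟩
  rw [← hfg, ← hprod, map_prod]

end PartialFractions

section PerfectField

variable {K : Type*} [Field K] [PerfectField K] (p : ℕ) [Fact p.Prime] [CharP K p]

theorem exists_irreducible_dvd_sub_pow {P : K[X]} (hP : Irreducible P) (a : K[X]) :
    ∃ b : K[X], P ∣ a - b ^ p := by
  have : Fact (Irreducible P) := ⟨hP⟩
  have : CharP (AdjoinRoot P) p := charP_of_injective_algebraMap' K p
  have : Module.Finite K (AdjoinRoot P) := (AdjoinRoot.powerBasis hP.ne_zero).finite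
  have : PerfectField (AdjoinRoot P) := Algebra.IsAlgebraic.perfectField (K := K)
  obtain ⟨y, hy⟩ := surjective_frobenius (AdjoinRoot P) p (AdjoinRoot.mk P a)
  obtain ⟨b, rfl⟩ := AdjoinRoot.mk_surjective y
  exact ⟨b, AdjoinRoot.mk_eq_mk.1 (by rw [← hy, frobenius_def, map_pow])⟩

theorem exists_div_irreducible_pow_eq_add_artinSchreierHom {F : Type*} [Field F] [Algebra K[X] F]
    [FaithfulSMul K[X] F] [CharP F p] {P : K[X]} (hm : P.Monic) (hP : Irreducible P)
    (a : K[X]) (n : ℕ) :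
    ∃ (Q : K[X]) (e : ℕ) (h : K[X]) (w : F),
      (Q ≠ 0 → 1 ≤ e ∧ ¬ p ∣ e ∧ IsCoprime Q P ∧ Q.natDegree < e * P.natDegree) ∧
      algebraMap K[X] F a / algebraMap K[X] F (P ^ n) =
        algebraMap K[X] F Q / algebraMap K[X] F (P ^ e) + algebraMap K[X] F h +
          artinSchreierHom F p w := by
  have hP0 : algebraMap K[X] F P ≠ 0 := by simpa using hP.ne_zero
  obtain ⟨c, e, w, hc, hac⟩ := exists_div_pow_eq_add_artinSchreierHom p hP0
    (exists_irreducible_dvd_sub_pow p hP) a n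
  have hmod := modByMonic_add_div c (P ^ e)
  refine ⟨c %ₘ P ^ e, e, c /ₘ P ^ e, w, fun hQ ↦ ?_, ?_⟩
  · have he : e ≠ 0 := by
      rintro rfl
      exact hQ (by rw [pow_zero, modByMonic_one])
    have hPe : P ∣ P ^ e * (c /ₘ P ^ e) := dvd_mul_of_dvd_left (dvd_pow_self P he) _
    refine ⟨Nat.one_le_iff_ne_zero.2 he, (hc he).1, ?_, ?_⟩
    · refine (hP.coprime_iff_not_dvd.2 fun hdvd ↦ (hc he).2 ?_).symm
      exact hmod ▸ dvd_add hdvd hPe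
    · rw [← natDegree_pow]
      exact natDegree_modByMonic_lt c (hm.pow e) fun h ↦ hP.not_isUnit <|
        isUnit_of_dvd_one (h ▸ dvd_pow_self P he)
  · rw [hac, ← congrArg (algebraMap K[X] F) hmod, map_add, map_mul, add_div,
      mul_div_cancel_left₀ _ (by simpa only [map_pow] using pow_ne_zero e hP0)]

theorem exists_natDegree_sub_artinSchreierHom_lt {g : K[X]} (hg : g.natDegree ≠ 0)
    (hpg : p ∣ g.natDegree) :
    ∃ v : K[X], (g - artinSchreierHom K[X] p v).natDegree < g.natDegree := by
  obtain ⟨m, hm⟩ := hpg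
  obtain ⟨d, hd⟩ := surjective_frobenius K p g.leadingCoeff
  have hvp : (C d * X ^ m) ^ p = C g.leadingCoeff * X ^ g.natDegree := by
    rw [mul_pow, ← C_pow, ← frobenius_def, hd, ← pow_mul, hm, mul_comm m]
  have hv : (C d * X ^ m).natDegree < g.natDegree := by
    have hm0 : 0 < m := Nat.pos_of_ne_zero fun h ↦ hg (by rw [hm, h, mul_zero])
    exact (natDegree_C_mul_X_pow_le d m).trans_lt <|
      hm ▸ lt_mul_left hm0 (Fact.out : p.Prime).one_lt
  have hlead : g.eraseLead.natDegree < g.natDegree :=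
    (eraseLead_natDegree_le g).trans_lt (Nat.sub_one_lt hg)
  refine ⟨C d * X ^ m, ?_⟩
  rw [artinSchreierHom_apply, hvp, ← sub_add, self_sub_C_mul_X_pow]
  exact (natDegree_add_le _ _).trans_lt (max_lt hlead hv)

theorem exists_polynomial_eq_add_artinSchreierHom (g : K[X]) :
    ∃ f w : K[X], (f.natDegree = 0 ∨ ¬ p ∣ f.natDegree) ∧ g = f + artinSchreierHom K[X] p w := by
  induction hn : g.natDegree using Nat.strong_induction_on generalizing g with
  | _ n ih =>
    by_cases hg : g.natDegree = 0 ∨ ¬ p ∣ g.natDegree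
    · exact ⟨g, 0, hg, by rw [map_zero, add_zero]⟩
    push Not at hg
    obtain ⟨v, hv⟩ := exists_natDegree_sub_artinSchreierHom_lt p hg.1 hg.2
    obtain ⟨f, w, hf, hfw⟩ := ih _ (hn ▸ hv) _ rfl
    exact ⟨f, w + v, hf, by rw [map_add, ← add_assoc, ← hfw, sub_add_cancel]⟩

theorem exists_finset_artinSchreier_normalization (α : RatFunc K) :
    ∃ (s : Finset K[X]) (Q : K[X] → K[X]) (e : K[X] → ℕ) (f : K[X]) (w : RatFunc K),
      (∀ P ∈ s, P.Monic ∧ Irreducible P) ∧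
      (∀ P ∈ s, 1 ≤ e P ∧ ¬ p ∣ e P ∧ IsCoprime (Q P) P ∧
        (Q P).natDegree < e P * P.natDegree) ∧
      (f.natDegree = 0 ∨ ¬ p ∣ f.natDegree) ∧
      α = ∑ P ∈ s, algebraMap K[X] (RatFunc K) (Q P) / algebraMap K[X] (RatFunc K) (P ^ e P) +
        algebraMap K[X] (RatFunc K) f + artinSchreierHom (RatFunc K) p w := by
  classical
  obtain ⟨s, n, g, a, hs, hα⟩ :=
    exists_div_eq_add_sum_div_irreducible_pow (F := RatFunc K) α.num α.monic_denom
  choose! Q e h w hQ hterm using fun P (hP : P ∈ s) ↦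
    exists_div_irreducible_pow_eq_add_artinSchreierHom (F := RatFunc K) p (hs P hP).1 (hs P hP).2
      (a P) (n P)
  obtain ⟨f, v, hf, hfv⟩ := exists_polynomial_eq_add_artinSchreierHom p (g + ∑ P ∈ s, h P)
  refine ⟨{P ∈ s | Q P ≠ 0}, Q, e, f,
    ∑ P ∈ s, w P + algebraMap K[X] (RatFunc K) v, fun P hP ↦ hs P (Finset.mem_filter.1 hP).1,
    fun P hP ↦ hQ P (Finset.mem_filter.1 hP).1 (Finset.mem_filter.1 hP).2, hf, ?_⟩
  have hzero : ∀ P ∈ s, algebraMap K[X] (RatFunc K) (Q P) /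
      algebraMap K[X] (RatFunc K) (P ^ e P) ≠ 0 → Q P ≠ 0 := fun P _ hne hQ0 ↦
    hne (by rw [hQ0, map_zero, zero_div])
  have hpoly := congrArg (algebraMap K[X] (RatFunc K)) hfv
  rw [map_add, map_sum, map_add, map_artinSchreierHom] at hpoly
  rw [Finset.sum_filter_of_ne hzero, ← α.num_div_denom, hα, Finset.sum_congr rfl hterm,
    Finset.sum_add_distrib, Finset.sum_add_distrib, map_add, map_sum]
  linear_combination hpoly

end PerfectField

theorem exists_fin_embedding_map_univ_eq {ι : Type*} (s : Finset ι) :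
    ∃ (r : ℕ) (P : Fin r ↪ ι), Finset.univ.map P = s :=
  ⟨s.card, s.equivFin.symm.toEmbedding.trans (.subtype _), by
    rw [← Finset.map_map, Finset.map_univ_equiv]; exact s.attach_map_val⟩

theorem artinSchreier_normalization_general
    (p : ℕ) (hp : p.Prime) (K : Type*) [Field K] [PerfectField K] [CharP K p]
    (α : RatFunc K) :
    ∃ (r : ℕ) (P Q : Fin r → K[X]) (e : Fin r → ℕ) (f : K[X]) (w : RatFunc K),
      (∀ i, (P i).Monic ∧ Irreducible (P i)) ∧
      Function.Injective P ∧
      (∀ i, 1 ≤ e i ∧ ¬ p ∣ e i ∧ IsCoprime (Q i) (P i) ∧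
        (Q i).natDegree < e i * (P i).natDegree) ∧
      (f.natDegree = 0 ∨ ¬ p ∣ f.natDegree) ∧
      α = (∑ i, algebraMap K[X] (RatFunc K) (Q i) / algebraMap K[X] (RatFunc K) (P i ^ e i)) +
            algebraMap K[X] (RatFunc K) f + (w ^ p - w) := by
  have : Fact p.Prime := ⟨hp⟩
  obtain ⟨s, Q, e, f, w, hs, hQ, hf, hα⟩ := exists_finset_artinSchreier_normalization p α
  obtain ⟨r, P, rfl⟩ := exists_fin_embedding_map_univ_eq s
  simp only [Finset.mem_map, Finset.mem_univ, true_and, forall_exists_index,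
    forall_apply_eq_imp_iff] at hs hQ
  exact ⟨r, P, Q ∘ P, e ∘ P, f, w, hs, P.injective, hQ, hf, by
    rwa [Finset.sum_map, artinSchreierHom_apply] at hα⟩

/-- (Normalization of Artin–Schreier equations over `k = 𝔽_q(T)`.)
Every `α ∈ k` can be written as `α = Σ_{i=1}^r Q_i/P_i^{e_i} + f + (w^p - w)` with the
`P_i` distinct monic irreducibles, `p ∤ e_i`, `gcd(Q_i, P_i) = 1`,
`deg Q_i < e_i · deg P_i`, and `f` a polynomial that is constant or of degree prime to `p`. -/
theorem artinSchreier_normalization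
    (p : ℕ) (hp : p.Prime) (Fq : Type*) [Field Fq] [Fintype Fq] [CharP Fq p]
    (α : RatFunc Fq) :
    ∃ (r : ℕ) (P Q : Fin r → Polynomial Fq) (e : Fin r → ℕ) (f : Polynomial Fq)
      (w : RatFunc Fq),
      (∀ i, (P i).Monic ∧ Irreducible (P i)) ∧
      Function.Injective P ∧
      (∀ i, 1 ≤ e i ∧ ¬ p ∣ e i ∧ IsCoprime (Q i) (P i) ∧
        (Q i).natDegree < e i * (P i).natDegree) ∧
      (f.natDegree = 0 ∨ ¬ p ∣ f.natDegree) ∧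
      α = (∑ i, algebraMap (Polynomial Fq) (RatFunc Fq) (Q i) /
              algebraMap (Polynomial Fq) (RatFunc Fq) (P i ^ e i)) +
            algebraMap (Polynomial Fq) (RatFunc Fq) f + (w ^ p - w) := by
  exact artinSchreier_normalization_general p hp Fq α
end

section
/- Let p be a prime, q a power of p, k = 𝔽_q(T), and n ≥ 1. Let W_n(k) denote the ring of p-typical Witt vectors of length n over k, with Witt addition ⊞ and subtraction ⊖, and let F : W_n(k) → W_n(k) be the map raising each Witt component to the p-th power. Let β⃗ ∈ W_n(k) and let P_1, …, P_r be distinct monic irreducible polynomials in 𝔽_q[T] such that every component of β⃗, as a rational function, has all monic irreducible factors of its denominator among P_1, …, P_r (i.e., finite poles only at the P_i). Then there exist α⃗, δ⃗_1, …, δ⃗_r, μ⃗ ∈ W_n(k) with β⃗ = δ⃗_1 ⊞ ⋯ ⊞ δ⃗_r ⊞ μ⃗ ⊞ (F(α⃗) ⊖ α⃗), such that: for each i and each 1 ≤ j ≤ n, the j-th component δ_{ij} of δ⃗_i is either 0 or of the form Q_{ij}/P_i^{e_{ij}} with e_{ij} ≥ 1, p ∤ e_{ij}, gcd(Q_{ij},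 P_i) = 1, and deg Q_{ij} < e_{ij} · deg P_i; and each component μ_j of μ⃗ is a polynomial f_j ∈ 𝔽_q[T] with either f_j ∈ 𝔽_q or p ∤ deg f_j. -/
/-!
Write `℘ a = a ^ p - a`. Over `A = K[X][1 / ∏ i, P i]`, partial fractions write every element as a
polynomial plus a polar part at each `P i`, and each of these is congruent modulo `℘ A` to a reduced
one, because `p`-th roots exist in `K` and in the residue fields `K[X] / (P i)`. Subtracting
Teichmüller representatives from a Witt vector according to such a decomposition of its zeroth
component leaves the Verschiebung of a shorter Witt vector over `A`, to which induction applies.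
-/

open Polynomial

/-- The map `F` on truncated Witt vectors raising each Witt component to the `p`-th
power. -/
def wittComponentPow (p n : ℕ) {R : Type*} [CommRing R]
    (x : TruncatedWittVector p n R) : TruncatedWittVector p n R :=
  TruncatedWittVector.mk p fun i => x.coeff i ^ p

/-- The Artin–Schreier operator `℘ : a ↦ a ^ p - a` of a ring of characteristic exponent `p`, as an
additive map, so that congruence modulo `℘ R` is membership in `(artinSchreier R p).range`. -/
def artinSchreier (R : Type*) [CommRing R] (p : ℕ) [ExpChar R p] : R →+ R :=
  (frobenius R p : R →+ R) - AddMonoidHom.id R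

theorem artinSchreier_apply {R : Type*} [CommRing R] (p : ℕ) [ExpChar R p] (a : R) :
    artinSchreier R p a = a ^ p - a :=
  rfl

theorem map_mem_range_artinSchreier {R S : Type*} [CommRing R] [CommRing S] (p : ℕ)
    [ExpChar R p] [ExpChar S p] (g : R →+* S) {x : R} (hx : x ∈ (artinSchreier R p).range) :
    g x ∈ (artinSchreier S p).range := by
  obtain ⟨a, rfl⟩ := hx
  exact ⟨g a, by simp [artinSchreier_apply]⟩

theorem sub_artinSchreier_mul_pow_eq {R : Type*} [CommRing R] {p : ℕ} [ExpChar R p] {g v : R}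
    (hv : v * g = 1) (x b : R) :
    (x - artinSchreier R p (b * v)) * g ^ p = x * g ^ p - b ^ p + b * g ^ (p - 1) := by
  have hvp : v ^ p * g ^ p = 1 := by rw [← mul_pow, hv, one_pow]
  have hg : g ^ p = g * g ^ (p - 1) := (mul_pow_sub_one (expChar_pos R p).ne' g).symm
  rw [artinSchreier_apply]
  linear_combination -b ^ p * hvp + b * v * hg + b * g ^ (p - 1) * hv

section WittVector

open WittVector (teichmuller verschiebung truncate)

variable {p : ℕ} [Fact p.Prime] {R S : Type*} [CommRing R] [CommRing S]

theorem frobenius_teichmuller [CharP R p] (a : R) :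
    WittVector.frobenius (teichmuller p a) = teichmuller p (a ^ p) := by
  rw [WittVector.frobenius_eq_map_frobenius, WittVector.map_teichmuller, frobenius_def]

theorem teichmuller_add_verschiebung_coeff_zero (a : R) (x : WittVector p R) :
    (teichmuller p a + verschiebung x).coeff 0 = a := by
  rw [WittVector.add_coeff_zero, WittVector.teichmuller_coeff_zero,
    WittVector.verschiebung_coeff_zero, add_zero]

theorem teichmuller_add_verschiebung_coeff_succ (a : R) (x : WittVector p R) (j : ℕ) :
    (teichmuller p a + verschiebung x).coeff (j + 1) = x.coeff j := by
  have hdisjoint (i : ℕ) : (teichmuller p a).coeff i = 0 ∨ (verschiebung x).coeff i = 0 := by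
    rcases i.eq_zero_or_pos with rfl | hi
    · exact Or.inr (WittVector.verschiebung_coeff_zero x)
    · exact Or.inl (WittVector.teichmuller_coeff_pos p a i hi)
  rw [WittVector.coeff_add_of_disjoint _ _ _ hdisjoint,
    WittVector.teichmuller_coeff_pos p a _ j.succ_pos, WittVector.verschiebung_coeff_succ, zero_add]

theorem exists_verschiebung_eq_of_coeff_zero {x : WittVector p R} (hx : x.coeff 0 = 0) :
    ∃ y, verschiebung y = x :=
  ⟨x.shift 1, (WittVector.eq_iterate_verschiebung (n := 1) (by simpa using hx)).symm⟩

theorem truncate_succ_verschiebung_eq_zero {n : ℕ} {x : WittVector p R} (hx : truncate n x = 0) :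
    truncate (n + 1) (verschiebung x) = 0 := by
  rw [← RingHom.mem_ker, WittVector.mem_ker_truncate] at hx ⊢
  rintro (_ | j) hj
  · exact WittVector.verschiebung_coeff_zero x
  · exact (WittVector.verschiebung_coeff_succ x j).trans (hx j (Nat.lt_of_succ_lt_succ hj))

/-- In the inductive step the Verschiebung `V` transports the decomposition of the remainder, being
additive and commuting with the Frobenius, and adding `[d]` to `V δ'` only prepends the component
`d`, so the components stay in the prescribed sets. -/
theorem exists_truncate_sub_eq_zero [CharP R p] {ι : Type*} [Fintype ι] {D : ι → Set R}
    (hD : ∀ c : R, ∃ d : ι → R, (∀ i, d i ∈ D i) ∧ c - ∑ i, d i ∈ (artinSchreier R p).range)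
    (n : ℕ) (β : WittVector p R) :
    ∃ (δ : ι → WittVector p R) (α : WittVector p R), (∀ i j, (δ i).coeff j ∈ D i) ∧
      truncate n (β - (∑ i, δ i + (WittVector.frobenius α - α))) = 0 := by
  induction n generalizing β with
  | zero =>
    obtain ⟨d, hd, -⟩ := hD 0
    exact ⟨fun i => WittVector.mk p fun _ => d i, 0, fun i _ => hd i,
      TruncatedWittVector.ext fun j => j.elim0⟩
  | succ n ih =>
    obtain ⟨d, hd, a, ha⟩ := hD (β.coeff 0)
    have hcoeff : (β - (∑ i, teichmuller p (d i) +
        (teichmuller p (a ^ p) - teichmuller p a))).coeff 0 = 0 := by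
      simp only [← WittVector.constantCoeff_apply, map_sub, map_add, map_sum]
      simp only [WittVector.constantCoeff_apply, WittVector.teichmuller_coeff_zero]
      rw [← artinSchreier_apply, ha]
      ring
    obtain ⟨β', hβ'⟩ := exists_verschiebung_eq_of_coeff_zero hcoeff
    obtain ⟨δ, α, hδ, hα⟩ := ih β'
    refine ⟨fun i => teichmuller p (d i) + verschiebung (δ i), teichmuller p a + verschiebung α,
      fun i j => ?_, ?_⟩
    · cases j with
      | zero => exact (teichmuller_add_verschiebung_coeff_zero (d i) (δ i)).symm ▸ hd i
      | succ j => exact (teichmuller_add_verschiebung_coeff_succ (d i) (δ i) j).symm ▸ hδ i j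
    · rw [← truncate_succ_verschiebung_eq_zero hα]
      congr 1
      simp only [map_sub, map_add, map_sum, hβ', frobenius_teichmuller,
        ← WittVector.verschiebung_frobenius_comm α, Finset.sum_add_distrib]
      ring

theorem wittComponentPow_truncate_map [CharP R p] (g : R →+* S) (n : ℕ) (x : WittVector p R) :
    wittComponentPow p n (truncate n (WittVector.map g x)) =
      truncate n (WittVector.map g (WittVector.frobenius x)) :=
  TruncatedWittVector.ext fun i => by simp [wittComponentPow, WittVector.coeff_frobenius_charP]

theorem truncate_map_eq_zero (g : R →+* S) {n : ℕ} {x : WittVector p R} (hx : truncate n x = 0) :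
    truncate n (WittVector.map g x) = 0 := by
  rw [← RingHom.mem_ker, WittVector.mem_ker_truncate] at hx ⊢
  exact fun i hi => by rw [WittVector.map_coeff, hx i hi, map_zero]

theorem exists_truncate_map_eq (g : R →+* S) {n : ℕ} {β : TruncatedWittVector p n S}
    (hβ : ∀ j, β.coeff j ∈ g.range) :
    ∃ b : WittVector p R, truncate n (WittVector.map g b) = β := by
  choose c hc using hβ
  refine ⟨WittVector.mk p fun j => if h : j < n then c ⟨j, h⟩ else 0,
    TruncatedWittVector.ext fun j => ?_⟩
  simp [hc]

theorem exists_eq_sum_add_wittComponentPow_sub [CharP R p] (g : R →+* S)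
    {ι : Type*} [Fintype ι] {D : ι → Set R}
    (hD : ∀ c : R, ∃ d : ι → R, (∀ i, d i ∈ D i) ∧ c - ∑ i, d i ∈ (artinSchreier R p).range)
    {n : ℕ} {β : TruncatedWittVector p n S} (hβ : ∀ j, β.coeff j ∈ g.range) :
    ∃ (δ : ι → TruncatedWittVector p n S) (α : TruncatedWittVector p n S),
      (∀ i j, (δ i).coeff j ∈ g '' D i) ∧ β = ∑ i, δ i + (wittComponentPow p n α - α) := by
  obtain ⟨b, rfl⟩ := exists_truncate_map_eq g hβ
  obtain ⟨δ, α, hδ, h⟩ := exists_truncate_sub_eq_zero hD n b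
  refine ⟨fun i => truncate n (WittVector.map g (δ i)), truncate n (WittVector.map g α),
    fun i j => ⟨_, hδ i j, by simp⟩, ?_⟩
  simpa [wittComponentPow_truncate_map, sub_eq_zero] using truncate_map_eq_zero g h

end WittVector

section Polynomial

theorem exists_dvd_pow_of_irreducible_dvd {M : Type*} [CommMonoidWithZero M] [WfDvdMonoid M]
    {a b : M} (ha : a ≠ 0) (h : ∀ q, Irreducible q → q ∣ a → q ∣ b) : ∃ N, a ∣ b ^ N := by
  induction a using WfDvdMonoid.induction_on_irreducible with
  | zero => exact (ha rfl).elim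
  | unit u hu => exact ⟨0, hu.dvd⟩
  | mul a q ha' hq ih =>
    obtain ⟨N, hN⟩ := ih ha' fun r hr hra => h r hr (hra.mul_left q)
    exact ⟨N + 1, pow_succ' b N ▸ mul_dvd_mul (h q hq (dvd_mul_right q a)) hN⟩

variable {K : Type*} [Field K]

theorem exists_dvd_prod_pow_of_monic_irreducible_dvd {ι : Type*} [Fintype ι] {P : ι → K[X]}
    {f : K[X]} (hf : f ≠ 0)
    (h : ∀ Q : K[X], Q.Monic → Irreducible Q → Q ∣ f → ∃ i, P i = Q) :
    ∃ N, f ∣ (∏ i, P i) ^ N := by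
  classical
  refine exists_dvd_pow_of_irreducible_dvd hf fun q hq hqf => ?_
  obtain ⟨i, hi⟩ := h (normalize q) (monic_normalize hq.ne_zero)
    ((normalize_associated q).irreducible_iff.mpr hq) (normalize_dvd_iff.mpr hqf)
  exact normalize_dvd_iff.mp (hi ▸ Finset.dvd_prod_of_mem P (Finset.mem_univ i))

theorem pairwise_isCoprime_of_monic_irreducible {ι : Type*} {P : ι → K[X]}
    (hP : ∀ i, (P i).Monic ∧ Irreducible (P i)) (hinj : Function.Injective P) :
    Pairwise fun i j => IsCoprime (P i) (P j) := fun i j hij =>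
  (hP i).2.coprime_iff_not_dvd.mpr fun hdvd => hij <| hinj <|
    eq_of_monic_of_associated (hP i).1 (hP j).1 ((hP i).2.associated_of_dvd (hP j).2 hdvd)

theorem exists_eq_algebraMap_add_sum_fractions {R : Type*} [CommRing R] [Nontrivial R]
    {ι : Type*} [Fintype ι] {P : ι → R[X]} (hP : ∀ i, (P i).Monic)
    (hcop : Pairwise fun i j => IsCoprime (P i) (P j))
    {A : Type*} [CommRing A] [Algebra R[X] A] [IsLocalization.Away (∏ i, P i) A] (x : A) :
    ∃ (N : ℕ) (f : R[X]) (Q : ι → R[X]) (y : ι → A),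
      (∀ i, (Q i).degree < (P i ^ N).degree) ∧
      (∀ i, y i * algebraMap R[X] A (P i ^ N) = algebraMap R[X] A (Q i)) ∧
      x = algebraMap R[X] A f + ∑ i, y i := by
  obtain ⟨N, g, hg⟩ := IsLocalization.Away.surj (∏ i, P i) x
  have hunit (i : ι) : IsUnit (algebraMap R[X] A (P i ^ N)) := by
    rw [map_pow]
    exact (IsLocalization.Away.isUnit_of_dvd (∏ i, P i)
      (Finset.dvd_prod_of_mem P (Finset.mem_univ i))).pow N
  choose u hu using fun i => (hunit i).exists_left_inv
  obtain ⟨f, Q, hQ, h⟩ := mul_prod_pow_inverse_eq_quo_add_sum_rem_mul_pow_inverse g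
    (s := Finset.univ) (g := fun i => P i ^ N) (fun i _ => (hP i).pow N)
    (fun i _ j _ hij => (hcop hij).pow) (fun _ => 1) (fun i _ => hu i)
  refine ⟨N, f, fun i => Q i 0, fun i => algebraMap R[X] A (Q i 0) * u i,
    fun i => hQ i (Finset.mem_univ i) 0, fun i => by rw [mul_assoc, hu, mul_one], ?_⟩
  have hprod : algebraMap R[X] A (∏ i, P i) ^ N * ∏ i, u i = 1 := by
    rw [map_prod, ← Finset.prod_pow, ← Finset.prod_mul_distrib]
    exact Finset.prod_eq_one fun i _ => by rw [← map_pow, mul_comm, hu]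
  have hx : algebraMap R[X] A g * ∏ i, u i = x := by rw [← hg, mul_assoc, hprod, mul_one]
  simpa [hx] using h

end Polynomial

section ReducedPolynomial

/-- A polynomial in Artin–Schreier normal form: constant, or of degree prime to `p`. -/
def IsReducedPolynomial (p : ℕ) {R : Type*} [CommRing R] (f : R[X]) : Prop :=
  f.natDegree = 0 ∨ ¬p ∣ f.natDegree

variable {p : ℕ} [Fact p.Prime] {R : Type*} [CommRing R] [CharP R p] [PerfectRing R p]

theorem exists_sub_artinSchreier_natDegree_lt {f : R[X]} (hf : ¬IsReducedPolynomial p f) :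
    ∃ a : R[X], (f - artinSchreier R[X] p a).natDegree < f.natDegree := by
  obtain ⟨hf0, m, hm⟩ : f.natDegree ≠ 0 ∧ p ∣ f.natDegree := by
    simpa [IsReducedPolynomial] using hf
  obtain ⟨b, hb⟩ := surjective_frobenius R p f.leadingCoeff
  have hmf : m < f.natDegree := by
    have hm0 : 0 < m := Nat.pos_of_ne_zero fun h => hf0 (by simp [hm, h])
    exact hm ▸ lt_mul_of_one_lt_left hm0 (Fact.out : p.Prime).one_lt
  have hpow : (C b * X ^ m) ^ p = C f.leadingCoeff * X ^ f.natDegree := by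
    rw [← hb, frobenius_def, mul_pow, ← C_pow, ← pow_mul, hm, mul_comm m]
  have hsub : f - artinSchreier R[X] p (C b * X ^ m) = f.eraseLead + C b * X ^ m := by
    rw [artinSchreier_apply, hpow]
    linear_combination -f.eraseLead_add_C_mul_X_pow
  refine ⟨C b * X ^ m, hsub ▸ (natDegree_add_le _ _).trans_lt (max_lt ?_ ?_)⟩
  · exact f.eraseLead_natDegree_le.trans_lt (Nat.sub_one_lt hf0)
  · exact (natDegree_C_mul_X_pow_le b m).trans_lt hmf

theorem exists_isReducedPolynomial_sub_mem_range (p : ℕ) [Fact p.Prime] [CharP R p]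
    [PerfectRing R p] (f : R[X]) :
    ∃ g, IsReducedPolynomial p g ∧ f - g ∈ (artinSchreier R[X] p).range := by
  induction h : f.natDegree using Nat.strong_induction_on generalizing f with
  | _ d ih =>
    by_cases hf : IsReducedPolynomial p f
    · exact ⟨f, hf, by simp⟩
    · obtain ⟨a, ha⟩ := exists_sub_artinSchreier_natDegree_lt hf
      obtain ⟨g, hg, hmem⟩ := ih _ (h ▸ ha) _ rfl
      exact ⟨g, hg, by simpa [sub_right_comm] using add_mem hmem ⟨a, rfl⟩⟩

end ReducedPolynomial

section ReducedPolarPart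

variable {K : Type*} [Field K]

/-- `x` is a polar part at `P` in Artin–Schreier normal form: it is zero, or a reduced proper
fraction `Q / P ^ e` with `e` prime to `p`. The equation `x = Q / P ^ e` is cleared of denominators
so that it makes sense in every `K[X]`-algebra; it determines `x` wherever `P` is regular. -/
def IsReducedPolarPart (p : ℕ) (P : K[X]) {A : Type*} [CommRing A] [Algebra K[X] A] (x : A) :
    Prop :=
  x = 0 ∨ ∃ (Q : K[X]) (e : ℕ), 1 ≤ e ∧ ¬p ∣ e ∧ IsCoprime Q P ∧
    Q.natDegree < e * P.natDegree ∧ x * algebraMap K[X] A (P ^ e) = algebraMap K[X] A Q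

theorem IsReducedPolarPart.map {p : ℕ} {P : K[X]} {A B : Type*} [CommRing A] [CommRing B]
    [Algebra K[X] A] [Algebra K[X] B] {x : A} (hx : IsReducedPolarPart p P x)
    (g : A →ₐ[K[X]] B) : IsReducedPolarPart p P (g x) := by
  rcases hx with rfl | ⟨Q, e, he, hpe, hcop, hdeg, h⟩
  · exact Or.inl (map_zero g)
  · exact Or.inr ⟨Q, e, he, hpe, hcop, hdeg, by rw [← g.commutes, ← map_mul, h, g.commutes]⟩

theorem isReducedPolarPart_iff_eq_div {p : ℕ} {P : K[X]} (hP : P ≠ 0) {L : Type*} [Field L]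
    [Algebra K[X] L] [FaithfulSMul K[X] L] {x : L} :
    IsReducedPolarPart p P x ↔ x = 0 ∨ ∃ (Q : K[X]) (e : ℕ), 1 ≤ e ∧ ¬p ∣ e ∧ IsCoprime Q P ∧
      Q.natDegree < e * P.natDegree ∧ x = algebraMap K[X] L Q / algebraMap K[X] L (P ^ e) := by
  have hne (e : ℕ) : algebraMap K[X] L (P ^ e) ≠ 0 := by simp [hP]
  simp only [IsReducedPolarPart, eq_div_iff (hne _)]

variable {p : ℕ} [Fact p.Prime] [CharP K p] [PerfectField K]

theorem exists_natDegree_lt_dvd_sub_pow {P : K[X]} (hP : Irreducible P) (Q : K[X]) :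
    ∃ B : K[X], B.natDegree < P.natDegree ∧ P ∣ Q - B ^ p := by
  have : Fact (Irreducible P) := ⟨hP⟩
  have : Module.Finite K (AdjoinRoot P) := (AdjoinRoot.powerBasis hP.ne_zero).finite
  have : PerfectField (AdjoinRoot P) := Algebra.IsAlgebraic.perfectField K
  have : CharP (AdjoinRoot P) p := charP_of_injective_algebraMap (algebraMap K _).injective p
  obtain ⟨b, hb⟩ := surjective_frobenius (AdjoinRoot P) p (AdjoinRoot.mk P Q)
  obtain ⟨B, rfl⟩ := AdjoinRoot.mk_surjective b
  have hmod : AdjoinRoot.mk P (B % P) = AdjoinRoot.mk P B := by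
    rw [AdjoinRoot.mk_eq_mk, EuclideanDomain.mod_eq_sub_mul_div, sub_sub_cancel_left]
    exact (dvd_mul_right P (B / P)).neg_right
  refine ⟨B % P, natDegree_mod_lt B hP.natDegree_pos.ne', ?_⟩
  rw [← AdjoinRoot.mk_eq_mk, map_pow, hmod, ← hb, frobenius_def]

variable {A : Type*} [CommRing A] [Algebra K[X] A] [CharP A p]

/-- Choose `B` with `P ∣ Q - B ^ p` and take `a = B / P ^ (e / p)`, so that subtracting `a ^ p`
lowers the pole order at `P`, while `a` itself has a smaller pole. -/
theorem exists_sub_artinSchreier_mul_pow_eq {P Q : K[X]} (hP : Irreducible P)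
    (hunit : IsUnit (algebraMap K[X] A P)) {e : ℕ} (he : e ≠ 0) (hpe : p ∣ e)
    (hQ : Q.degree < (P ^ e).degree) {x : A}
    (hx : x * algebraMap K[X] A (P ^ e) = algebraMap K[X] A Q) :
    ∃ (a : A) (S : K[X]), P ∣ S ∧ S.degree < (P ^ e).degree ∧
      (x - artinSchreier A p a) * algebraMap K[X] A (P ^ e) = algebraMap K[X] A S := by
  have hp : p.Prime := Fact.out
  obtain ⟨m, rfl⟩ := hpe
  have hPm : P ∣ P ^ m := dvd_pow_self P (right_ne_zero_of_mul he)
  obtain ⟨B, hBdeg, hB⟩ := exists_natDegree_lt_dvd_sub_pow (p := p) hP Q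
  have hBm : B.natDegree < (P ^ m).natDegree :=
    hBdeg.trans_le (natDegree_le_of_dvd hPm (pow_ne_zero m hP.ne_zero))
  obtain ⟨v, hv⟩ : ∃ v, v * algebraMap K[X] A (P ^ m) = 1 := by
    rw [map_pow]
    exact (hunit.pow m).exists_left_inv
  rw [pow_mul'] at hQ hx ⊢
  generalize P ^ m = G at *
  refine ⟨algebraMap K[X] A B * v, Q - B ^ p + B * G ^ (p - 1), ?_, ?_, ?_⟩
  · exact dvd_add hB ((hPm.trans (dvd_pow_self G (Nat.sub_ne_zero_of_lt hp.one_lt))).mul_left B)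
  · refine (degree_add_le _ _).trans_lt (max_lt ((degree_sub_le _ _).trans_lt (max_lt hQ ?_)) ?_)
    · apply degree_lt_degree
      rw [natDegree_pow, natDegree_pow]
      exact Nat.mul_lt_mul_of_pos_left hBm hp.pos
    · apply degree_lt_degree
      have hG : G ≠ 0 := ne_zero_of_natDegree_gt hBm
      rw [← mul_pow_sub_one hp.ne_zero, natDegree_mul hG (pow_ne_zero _ hG)]
      exact natDegree_mul_le.trans_lt (Nat.add_lt_add_right hBm _)
  · rw [map_pow] at hx ⊢
    rw [sub_artinSchreier_mul_pow_eq hv, hx]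
    simp only [map_add, map_sub, map_mul, map_pow]

/-- Induction on `e`: if `P ∣ Q` the fraction `Q / P ^ e` can be cancelled, and if `p ∣ e` a
suitable `℘ a` brings it into that case. -/
theorem exists_isReducedPolarPart_sub_mem_range {P : K[X]} (hP : Irreducible P)
    (hunit : IsUnit (algebraMap K[X] A P)) {e : ℕ} {Q : K[X]} (hQ : Q.degree < (P ^ e).degree)
    {x : A} (hx : x * algebraMap K[X] A (P ^ e) = algebraMap K[X] A Q) :
    ∃ d : A, IsReducedPolarPart p P d ∧ x - d ∈ (artinSchreier A p).range := by
  induction e generalizing Q x with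
  | zero =>
    have hQ0 : Q = 0 := by simpa using hQ
    exact ⟨0, Or.inl rfl, by simp_all⟩
  | succ e ih =>
    have of_dvd {y : A} {S : K[X]} (hPS : P ∣ S) (hS : S.degree < (P ^ (e + 1)).degree)
        (hy : y * algebraMap K[X] A (P ^ (e + 1)) = algebraMap K[X] A S) :
        ∃ d : A, IsReducedPolarPart p P d ∧ y - d ∈ (artinSchreier A p).range := by
      obtain ⟨T, rfl⟩ := hPS
      refine ih (Q := T) ?_ ?_
      · rw [pow_succ'] at hS
        contrapose! hS
        rw [degree_mul, degree_mul]
        gcongr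
      · rw [pow_succ', map_mul, map_mul, mul_left_comm] at hy
        exact hunit.mul_left_cancel hy
    by_cases hPQ : P ∣ Q
    · exact of_dvd hPQ hQ hx
    by_cases hpe : p ∣ e + 1
    · obtain ⟨a, S, hPS, hS, hy⟩ :=
        exists_sub_artinSchreier_mul_pow_eq hP hunit e.succ_ne_zero hpe hQ hx
      obtain ⟨d, hd, hmem⟩ := of_dvd hPS hS hy
      exact ⟨d, hd, by simpa [sub_right_comm] using add_mem hmem ⟨a, rfl⟩⟩
    · have hdeg : Q.natDegree < (e + 1) * P.natDegree := by
        rw [← natDegree_pow]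
        exact natDegree_lt_natDegree (fun h => hPQ (h ▸ dvd_zero P)) hQ
      exact ⟨x, Or.inr ⟨Q, e + 1, e.succ_pos, hpe, (hP.coprime_iff_not_dvd.mpr hPQ).symm, hdeg, hx⟩,
        by simp⟩

end ReducedPolarPart

section Decomposition

variable {p : ℕ} [Fact p.Prime] {K : Type*} [Field K] [CharP K p] [PerfectField K]

theorem exists_sub_sum_isReducedPolarPart_add_mem_range {ι : Type*} [Fintype ι] {P : ι → K[X]}
    (hP : ∀ i, (P i).Monic ∧ Irreducible (P i)) (hinj : Function.Injective P) {A : Type*}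
    [CommRing A] [CharP A p] [Algebra K[X] A] [IsLocalization.Away (∏ i, P i) A] (x : A) :
    ∃ (g : K[X]) (d : ι → A), IsReducedPolynomial p g ∧ (∀ i, IsReducedPolarPart p (P i) (d i)) ∧
      x - (algebraMap K[X] A g + ∑ i, d i) ∈ (artinSchreier A p).range := by
  obtain ⟨N, f, Q, y, hQ, hy, rfl⟩ := exists_eq_algebraMap_add_sum_fractions (fun i => (hP i).1)
    (pairwise_isCoprime_of_monic_irreducible hP hinj) x
  obtain ⟨g, hg, hfg⟩ := exists_isReducedPolynomial_sub_mem_range p f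
  have hunit (i : ι) : IsUnit (algebraMap K[X] A (P i)) :=
    IsLocalization.Away.isUnit_of_dvd (∏ i, P i) (Finset.dvd_prod_of_mem P (Finset.mem_univ i))
  choose d hd hyd using fun i =>
    exists_isReducedPolarPart_sub_mem_range (p := p) (hP i).2 (hunit i) (hQ i) (hy i)
  refine ⟨g, d, hg, hd, ?_⟩
  rw [add_sub_add_comm, ← map_sub, ← Finset.sum_sub_distrib]
  exact add_mem (map_mem_range_artinSchreier p _ hfg) (sum_mem fun i _ => hyd i)

/-- Allowing poles only at the `P i` keeps the lower components from acquiring new poles, so the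
Witt vectors are decomposed over `K[X][1 / ∏ i, P i]` rather than over `RatFunc K`. -/
theorem artinSchreierWitt_normalization_general
    (p : ℕ) [Fact p.Prime] (K : Type*) [Field K] [PerfectField K] [CharP K p] (n : ℕ)
    (β : TruncatedWittVector p n (RatFunc K)) {ι : Type*} [Fintype ι] (P : ι → K[X])
    (hP : ∀ i, (P i).Monic ∧ Irreducible (P i)) (hPinj : Function.Injective P)
    (hβ : ∀ j : Fin n, ∀ Q : K[X], Q.Monic → Irreducible Q →
      Q ∣ (β.coeff j).denom → ∃ i, P i = Q) :
    ∃ (α μ : TruncatedWittVector p n (RatFunc K)) (δ : ι → TruncatedWittVector p n (RatFunc K)),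
      β = (∑ i, δ i) + μ + (wittComponentPow p n α - α) ∧
      (∀ (i : ι) (j : Fin n),
        (δ i).coeff j = 0 ∨
        ∃ (Q : K[X]) (e : ℕ), 1 ≤ e ∧ ¬ p ∣ e ∧ IsCoprime Q (P i) ∧
          Q.natDegree < e * (P i).natDegree ∧
          (δ i).coeff j = algebraMap K[X] (RatFunc K) Q / algebraMap K[X] (RatFunc K) (P i ^ e)) ∧
      (∀ j : Fin n, ∃ f : K[X],
        μ.coeff j = algebraMap K[X] (RatFunc K) f ∧ (f.natDegree = 0 ∨ ¬ p ∣ f.natDegree)) := by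
  have hprod : ∏ i, P i ≠ 0 := Finset.prod_ne_zero_iff.mpr fun i _ => (hP i).1.ne_zero
  let S := Localization.subalgebra.ofField (RatFunc K) (Submonoid.powers (∏ i, P i))
    (powers_le_nonZeroDivisors_of_noZeroDivisors hprod)
  have : CharP S p := charP_of_injective_algebraMap (algebraMap K S).injective p
  let D : Option ι → Set S := fun o => o.elim
    {x | ∃ f : K[X], algebraMap K[X] S f = x ∧ IsReducedPolynomial p f}
    fun i => {x | IsReducedPolarPart p (P i) x}
  have hD (c : S) : ∃ d : Option ι → S, (∀ o, d o ∈ D o) ∧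
      c - ∑ o, d o ∈ (artinSchreier S p).range := by
    obtain ⟨g, d, hg, hd, h⟩ := exists_sub_sum_isReducedPolarPart_add_mem_range hP hPinj c
    exact ⟨fun o => o.elim (algebraMap K[X] S g) d, Option.forall.mpr ⟨⟨g, rfl, hg⟩, hd⟩,
      by simpa [Fintype.sum_option] using h⟩
  have hβS (j : Fin n) : β.coeff j ∈ (S.val : S →+* RatFunc K).range := by
    obtain ⟨N, hN⟩ := exists_dvd_prod_pow_of_monic_irreducible_dvd (β.coeff j).denom_ne_zero (hβ j)
    obtain ⟨g, hg⟩ := (RatFunc.denom_dvd (pow_ne_zero N hprod)).mp hN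
    exact ⟨⟨_, g, _, ⟨N, rfl⟩, hg.trans (div_eq_mul_inv _ _)⟩, rfl⟩
  obtain ⟨δ, α, hδ, h⟩ := exists_eq_sum_add_wittComponentPow_sub (S.val : S →+* RatFunc K) hD hβS
  refine ⟨α, δ none, fun i => δ (some i), ?_, fun i j => ?_, fun j => ?_⟩
  · rw [h, Fintype.sum_option, add_comm (δ none)]
  · obtain ⟨x, hx, hxδ⟩ := hδ (some i) j
    exact (isReducedPolarPart_iff_eq_div (hP i).1.ne_zero).mp (hxδ ▸ hx.map S.val)
  · obtain ⟨_, ⟨f, rfl, hf⟩, hxδ⟩ := hδ none j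
    exact ⟨f, hxδ.symm, hf⟩

end Decomposition

/-- (Normalization of Artin–Schreier–Witt equations over `k = 𝔽_q(T)`.)
If all finite poles of the components of `β⃗ ∈ W_n(k)` lie among distinct monic
irreducibles `P_1, …, P_r`, then `β⃗ = δ⃗_1 ⊞ ⋯ ⊞ δ⃗_r ⊞ μ⃗ ⊞ (F(α⃗) ⊖ α⃗)` where each
component of `δ⃗_i` is `0` or `Q/P_i^e` with `p ∤ e`, `gcd(Q, P_i) = 1`,
`deg Q < e·deg P_i`, and each component of `μ⃗` is a polynomial that is constant or of
degree prime to `p`. -/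
theorem artinSchreierWitt_normalization
    (p : ℕ) [Fact p.Prime] (Fq : Type*) [Field Fq] [Fintype Fq] [CharP Fq p]
    (n : ℕ) (hn : 1 ≤ n)
    (β : TruncatedWittVector p n (RatFunc Fq))
    (r : ℕ) (P : Fin r → Polynomial Fq)
    (hP : ∀ i, (P i).Monic ∧ Irreducible (P i)) (hPinj : Function.Injective P)
    (hβ : ∀ j : Fin n, ∀ Q : Polynomial Fq, Q.Monic → Irreducible Q →
      Q ∣ (β.coeff j).denom → ∃ i, P i = Q) :
    ∃ (α μ : TruncatedWittVector p n (RatFunc Fq))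
      (δ : Fin r → TruncatedWittVector p n (RatFunc Fq)),
      β = (∑ i, δ i) + μ + (wittComponentPow p n α - α) ∧
      (∀ (i : Fin r) (j : Fin n),
        (δ i).coeff j = 0 ∨
        ∃ (Q : Polynomial Fq) (e : ℕ), 1 ≤ e ∧ ¬ p ∣ e ∧ IsCoprime Q (P i) ∧
          Q.natDegree < e * (P i).natDegree ∧
          (δ i).coeff j = algebraMap (Polynomial Fq) (RatFunc Fq) Q /
            algebraMap (Polynomial Fq) (RatFunc Fq) (P i ^ e)) ∧
      (∀ j : Fin n, ∃ f : Polynomial Fq,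
        μ.coeff j = algebraMap (Polynomial Fq) (RatFunc Fq) f ∧
        (f.natDegree = 0 ∨ ¬ p ∣ f.natDegree)) :=
  artinSchreierWitt_normalization_general p Fq n β P hP hPinj hβ
end
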